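/- Let γ : [a,b] → ℝ³ be a minimal inspection curve parametrized with constant speed. Then |γ(t)| ≥ 1 for all t, and for almost every t ∈ [a,b] (where γ is differentiable with γ′(t) ≠ 0) the tangent line {γ(t) + s·γ′(t) : s ∈ ℝ} is disjoint from the open unit ball; equivalently, ⟨γ(t), γ′(t)⟩² ≤ |γ′(t)|²·(|γ(t)|² − 1), i.e. the angle α(t) between γ(t) and γ′(t) satisfies α(t) ≥ arcsin(1/|γ(t)|). -/

import Mathlib

open MeasureTheory Set Real
open scoped ENNReal NNReal RealInnerProductSpace

noncomputable section

abbrev E3 := EuclideanSpace ℝ (Fin 3)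

/-- A closed rectifiable curve on `[a,b]` whose convex hull contains the unit sphere. -/
def IsInspection (a b : ℝ) (γ : ℝ → E3) : Prop :=
  a < b ∧ ContinuousOn γ (Set.Icc a b) ∧ γ a = γ b ∧ eVariationOn γ (Set.Icc a b) ≠ ⊤ ∧
    Metric.sphere (0 : E3) 1 ⊆ convexHull ℝ (γ '' Set.Icc a b)

/-- A minimal inspection curve: an inspection curve of least length. -/
def IsMinimalInspection (a b : ℝ) (γ : ℝ → E3) : Prop :=
  IsInspection a b γ ∧
    ∀ (c d : ℝ) (β : ℝ → E3), IsInspection c d β →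
      eVariationOn γ (Set.Icc a b) ≤ eVariationOn β (Set.Icc c d)


/-- there is a rectifiable-or-not arc from p to q of length at most l passing through all of S -/
def Arc (p q : E3) (S : Set E3) (l : ℝ≥0∞) : Prop :=
  ∃ (c d : ℝ) (f : ℝ → E3), c ≤ d ∧ ContinuousOn f (Icc c d) ∧ f c = p ∧ f d = q ∧
    S ⊆ f '' Icc c d ∧ eVariationOn f (Icc c d) ≤ l

/-- S sees the whole unit sphere -/
def Sees (S : Set E3) : Prop := ∀ u : E3, ‖u‖ = 1 → ∃ x ∈ S, 1 ≤ ⟪x, u⟫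

lemma Arc.of_curve {f : ℝ → E3} {c d : ℝ} (h : c ≤ d) (hf : ContinuousOn f (Icc c d)) :
    Arc (f c) (f d) (f '' Icc c d) (eVariationOn f (Icc c d)) :=
  ⟨c, d, f, h, hf, rfl, rfl, subset_rfl, le_rfl⟩

lemma Arc.mono {p q : E3} {S S' : Set E3} {l l' : ℝ≥0∞} (h : Arc p q S l) (hS : S' ⊆ S)
    (hl : l ≤ l') : Arc p q S' l' := by
  obtain ⟨c, d, f, h1, h2, h3, h4, h5, h6⟩ := h
  exact ⟨c, d, f, h1, h2, h3, h4, hS.trans h5, h6.trans hl⟩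

lemma Arc.trans {p q r : E3} {S S' : Set E3} {l l' : ℝ≥0∞} (h : Arc p q S l)
    (h' : Arc q r S' l') : Arc p r (S ∪ S') (l + l') := by
  obtain ⟨c, d, f, h1, h2, h3, h4, h5, h6⟩ := h
  obtain ⟨c', d', g, g1, g2, g3, g4, g5, g6⟩ := h'
  let k : ℝ → E3 := fun t => g (t - d + c')
  let m : ℝ := d + (d' - c')
  have hdm : d ≤ m := by simp only [m]; linarith
  let F : ℝ → E3 := fun t => if t ≤ d then f t else k t
  have F1 : EqOn F f (Icc c d) := fun t ht => by simp only [F]; rw [if_pos ht.2]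
  have F2 : EqOn F k (Icc d m) := fun t ht => by
    simp only [F]
    rcases eq_or_lt_of_le ht.1 with h | h
    · subst h; rw [if_pos le_rfl]; simp [k, g3, h4]
    · rw [if_neg (not_le.2 h)]
  have himg : (fun t : ℝ => t - d + c') '' Icc d m = Icc c' d' := by
    ext y; constructor
    · rintro ⟨t, ht, rfl⟩; simp only [m, mem_Icc] at ht ⊢; constructor <;> linarith [ht.1, ht.2]
    · intro hy; refine ⟨y - c' + d, ?_, by ring⟩
      simp only [m, mem_Icc] at hy ⊢; constructor <;> linarith [hy.1, hy.2]
  have hk : ContinuousOn k (Icc d m) := by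
    apply ContinuousOn.comp g2 (by fun_prop)
    rw [← himg]; exact mapsTo_image _ _
  have hU : Icc c m = Icc c d ∪ Icc d m := (Icc_union_Icc_eq_Icc h1 hdm).symm
  refine ⟨c, m, F, h1.trans hdm, ?_, ?_, ?_, ?_, ?_⟩
  · rw [hU]
    apply ContinuousOn.union_of_isClosed _ _ isClosed_Icc isClosed_Icc
    · exact h2.congr F1
    · exact hk.congr F2
  · rw [F1 ⟨le_rfl, h1⟩, h3]
  · rw [F2 ⟨hdm, le_rfl⟩]; simp [k, m, g4]
  · rw [hU, image_union]
    apply union_subset_union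
    · rwa [F1.image_eq]
    · rw [F2.image_eq]
      have : k '' Icc d m = g '' Icc c' d' := by
        rw [← himg, image_image]
      rwa [this]
  · have hG : IsGreatest (Icc c d) d := ⟨⟨h1, le_rfl⟩, fun y hy => hy.2⟩
    have hL : IsLeast (Icc d m) d := ⟨⟨le_rfl, hdm⟩, fun y hy => hy.1⟩
    rw [hU, eVariationOn.union F hG hL, eVariationOn.congr F1, eVariationOn.congr F2]
    refine add_le_add h6 (le_trans ?_ g6)
    apply eVariationOn.comp_le_of_monotoneOn g (fun t : ℝ => t - d + c')
    · intro x _ y _ hxy; simpa using hxy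
    · rw [← himg]; exact mapsTo_image _ _

lemma Arc.of_lip {f : ℝ → E3} {c d : ℝ} {K : ℝ≥0} (h : c ≤ d) (hf : LipschitzWith K f) :
    Arc (f c) (f d) (f '' Icc c d) (K * ENNReal.ofReal (d - c)) := by
  refine (Arc.of_curve h hf.continuous.continuousOn).mono subset_rfl ?_
  have := (hf.lipschitzOnWith (s := univ)).comp_eVariationOn_le (f := f) (g := id) (s := Icc c d)
    (fun _ _ => mem_univ _)
  rwa [eVariationOn_id_Icc] at this

lemma Arc.seg (p q : E3) : Arc p q {p, q} (ENNReal.ofReal ‖q - p‖) := by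
  have hl : LipschitzWith (‖q - p‖₊) (fun t : ℝ => p + t • (q - p)) := by
    apply LipschitzWith.of_dist_le_mul
    intro x y
    rw [dist_eq_norm, dist_eq_norm]
    have : p + x • (q - p) - (p + y • (q - p)) = (x - y) • (q - p) := by module
    rw [this, norm_smul, mul_comm]; simp
  have := Arc.of_lip (c := 0) (d := 1) zero_le_one hl
  simp only [zero_smul, add_zero, one_smul, add_sub_cancel, sub_zero, ENNReal.ofReal_one,
    mul_one] at this
  refine this.mono ?_ ?_
  · rintro x (rfl | rfl)
    · exact ⟨0, by simp, by simp⟩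
    · exact ⟨1, by simp, by simp⟩
  · rw [ofReal_norm]; rfl

/-- L1 -/
lemma IsInspection.sees {a b : ℝ} {γ : ℝ → E3} (h : IsInspection a b γ) :
    Sees (γ '' Icc a b) := by
  intro u hu
  by_contra! hc
  have hconv : Convex ℝ {x : E3 | ⟪x, u⟫ < 1} := by
    have : {x : E3 | ⟪x, u⟫ < 1} = {x : E3 | (innerSL ℝ u) x < 1} := by
      ext x; simp [real_inner_comm]
    rw [this]; exact convex_halfSpace_lt (innerSL ℝ u).isLinear 1
  have h1 := convexHull_min (s := γ '' Icc a b) (t := {x : E3 | ⟪x, u⟫ < 1}) hc hconv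
  have h2 := h1 (h.2.2.2.2 (by simpa using hu : u ∈ Metric.sphere (0 : E3) 1))
  simp [hu] at h2

lemma ball_subset_of_sees {S : Set E3} (h : Sees S) :
    Metric.ball (0 : E3) 1 ⊆ closure (convexHull ℝ S) := by
  intro w hw
  by_contra hc
  obtain ⟨f, s, hs1, hs2⟩ := geometric_hahn_banach_closed_point
    (convex_convexHull ℝ S).closure isClosed_closure hc
  set v := (InnerProductSpace.toDual ℝ E3).symm f with hv
  have hf : ∀ x, f x = ⟪v, x⟫ := fun x => by simp [hv]
  have hne : v ≠ 0 := by
    intro h0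
    obtain ⟨x, hx, _⟩ := h (EuclideanSpace.single 0 1) (by simp)
    have := hs1 x (subset_closure (subset_convexHull ℝ S hx))
    simp [hf, h0] at this hs2; linarith
  have hn : 0 < ‖v‖ := norm_pos_iff.2 hne
  obtain ⟨x, hx, hx1⟩ := h (‖v‖⁻¹ • v) (by rw [norm_smul, norm_inv, norm_norm, inv_mul_cancel₀ hn.ne'])
  have h1 := hs1 x (subset_closure (subset_convexHull ℝ S hx))
  rw [hf] at h1 hs2
  rw [inner_smul_right, real_inner_comm, inv_mul_eq_div, le_div_iff₀ hn] at hx1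
  have h3 := real_inner_le_norm v w
  have h4 : ‖w‖ < 1 := by simpa using hw
  nlinarith

lemma sphere_subset_of_sees {S : Set E3} (h : Sees S) {k : ℝ} (hk : 1 < k) :
    Metric.sphere (0 : E3) 1 ⊆ convexHull ℝ ((fun x => k • x) '' S) := by
  have h1 := ball_subset_of_sees h
  have hk0 : k ≠ 0 := by positivity
  have hop : IsOpen (Metric.ball (0 : E3) 1) := Metric.isOpen_ball
  have h2 : Metric.ball (0 : E3) 1 ⊆ interior (closure (convexHull ℝ S)) :=
    interior_maximal h1 hop
  have hne : (interior (closure (convexHull ℝ S))).Nonempty := ⟨0, h2 (by simp)⟩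
  have h3 : interior (closure (convexHull ℝ S)) = interior (convexHull ℝ S) := by
    apply Convex.interior_closure_eq_interior_of_nonempty_interior (convex_convexHull ℝ S)
    rw [(convex_convexHull ℝ S).interior_nonempty_iff_affineSpan_eq_top]
    have := (convex_convexHull ℝ S).closure.interior_nonempty_iff_affineSpan_eq_top.1 hne
    rw [eq_top_iff, ← this]
    apply affineSpan_le.2
    apply closure_minimal (subset_affineSpan ℝ _)
    exact (affineSpan ℝ (convexHull ℝ S)).closed_of_finiteDimensional
  intro u hu
  have hu1 : ‖u‖ = 1 := by simpa using hu
  have h4 : k⁻¹ • u ∈ convexHull ℝ S := by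
    apply interior_subset; rw [← h3]; apply h2
    simp only [mem_ball_zero_iff, norm_smul, norm_inv, hu1, mul_one, Real.norm_eq_abs]
    rw [abs_of_pos (by positivity)]
    exact inv_lt_one_of_one_lt₀ hk
  have : (fun x : E3 => k • x) '' convexHull ℝ S = convexHull ℝ ((fun x => k • x) '' S) :=
    (LinearMap.lsmul ℝ E3 k).image_convexHull S
  rw [← this]
  exact ⟨k⁻¹ • u, h4, by simp [smul_smul, hk0]⟩

lemma Arc.smul {p q : E3} {S : Set E3} {l : ℝ≥0∞} (h : Arc p q S l) (k : ℝ≥0) :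
    Arc ((k : ℝ) • p) ((k : ℝ) • q) ((fun x => (k : ℝ) • x) '' S) (k * l) := by
  obtain ⟨c, d, f, h1, h2, h3, h4, h5, h6⟩ := h
  refine ⟨c, d, fun t => (k : ℝ) • f t, h1, by fun_prop, by simp [h3], by simp [h4], ?_, ?_⟩
  · rintro _ ⟨x, hx, rfl⟩
    obtain ⟨t, ht, rfl⟩ := h5 hx
    exact ⟨t, ht, rfl⟩
  · have hl : LipschitzOnWith k (fun x : E3 => (k : ℝ) • x) univ := by
      apply LipschitzWith.lipschitzOnWith
      apply LipschitzWith.of_dist_le_mul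
      intro x y
      rw [dist_smul₀]; simp
    exact (hl.comp_eVariationOn_le (g := f) (fun _ _ => mem_univ _)).trans (by gcongr)

/-- L2: comparison -/
lemma IsMinimalInspection.le_of_arc {a b : ℝ} {γ : ℝ → E3} (h : IsMinimalInspection a b γ)
    {p : E3} {S : Set E3} {l : ℝ≥0∞} (hA : Arc p p S l) (hS : Sees S) :
    eVariationOn γ (Icc a b) ≤ l := by
  by_cases hl : l = ⊤
  · simp [hl]
  lift l to ℝ≥0 using hl
  have hfin := h.1.2.2.2.1
  lift eVariationOn γ (Icc a b) to ℝ≥0 using hfin with V hV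
  have key : ∀ k : ℝ≥0, 1 < k → V ≤ k * l := by
    intro k hk
    have hsub := sphere_subset_of_sees hS (k := k) (by exact_mod_cast hk)
    obtain ⟨c, d, f, h1, h2, h3, h4, h5, h6⟩ := hA.smul k
    have hcd : c < d := by
      rcases eq_or_lt_of_le h1 with h | h
      · subst h
        exfalso
        have hS' : ∀ x ∈ S, (k : ℝ) • x = (k : ℝ) • p := by
          intro x hx
          obtain ⟨t, ht, he⟩ := h5 ⟨x, hx, rfl⟩
          simp only [Icc_self, mem_singleton_iff] at ht
          rw [← h3, ← ht, he]
        have hS2 : ∀ x ∈ S, x = p := fun x hx => by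
          have hk0 : (k : ℝ) ≠ 0 := by
            have : (1 : ℝ) < k := by exact_mod_cast hk
            positivity
          exact smul_right_injective E3 hk0 (hS' x hx)
        obtain ⟨x, hx, hx1⟩ := hS (EuclideanSpace.single 0 1) (by simp)
        obtain ⟨y, hy, hy1⟩ := hS (-EuclideanSpace.single 0 1) (by simp)
        rw [hS2 x hx] at hx1
        rw [hS2 y hy, inner_neg_right] at hy1
        linarith
      · exact h
    have hi : IsInspection c d f := ⟨hcd, h2, by rw [h3, h4], ne_top_of_le_ne_top (by
      exact ENNReal.mul_ne_top ENNReal.coe_ne_top ENNReal.coe_ne_top) h6,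
      hsub.trans (convexHull_mono h5)⟩
    have := (h.2 c d f hi).trans h6
    rw [← hV] at this
    exact_mod_cast this
  norm_cast
  have hc : Filter.Tendsto (fun k : ℝ≥0 => k * l) (nhdsWithin 1 (Ioi 1)) (nhds (1 * l)) := by
    apply Filter.Tendsto.mono_left _ nhdsWithin_le_nhds
    exact Continuous.tendsto (by fun_prop) 1
  rw [one_mul] at hc
  apply ge_of_tendsto hc
  filter_upwards [self_mem_nhdsWithin] with k hk using key k hk

lemma Arc.poly (q : ℕ → E3) (n : ℕ) :
    Arc (q 0) (q n) (q '' Iic n) (ENNReal.ofReal (∑ i ∈ Finset.range n, ‖q (i + 1) - q i‖)) := by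
  induction n with
  | zero =>
    refine (Arc.seg (q 0) (q 0)).mono ?_ (by simp)
    rintro _ ⟨i, hi, rfl⟩
    simp at hi; simp [hi]
  | succ n ih =>
    refine (ih.trans (Arc.seg (q n) (q (n+1)))).mono ?_ ?_
    · rintro _ ⟨i, hi, rfl⟩
      rcases Nat.lt_or_ge n i with h | h
      · have : i = n + 1 := le_antisymm hi h
        right; simp [this]
      · left; exact ⟨i, h, rfl⟩
    · rw [Finset.sum_range_succ, ENNReal.ofReal_add (Finset.sum_nonneg fun _ _ => norm_nonneg _)
        (norm_nonneg _)]


lemma exists_angle (x y : ℝ) (hy : 0 ≤ y) :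
    ∃ t ∈ Icc 0 π, x * cos t + y * sin t = √(x ^ 2 + y ^ 2) := by
  set m := √(x ^ 2 + y ^ 2) with hm
  have hm2 : m ^ 2 = x ^ 2 + y ^ 2 := Real.sq_sqrt (by positivity)
  have hm0 : 0 ≤ m := Real.sqrt_nonneg _
  rcases hm0.eq_or_lt with h | h
  · have hx : x = 0 := by nlinarith [sq_nonneg x, sq_nonneg y]
    have hy : y = 0 := by nlinarith [sq_nonneg x, sq_nonneg y]
    exact ⟨0, ⟨le_rfl, Real.pi_pos.le⟩, by simp [hx, hy, ← h]⟩
  · have hx1 : |x| ≤ m := abs_le_of_sq_le_sq (by nlinarith) hm0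
    have hx2 := abs_le.1 hx1
    refine ⟨arccos (x / m), ⟨arccos_nonneg _, arccos_le_pi _⟩, ?_⟩
    rw [Real.cos_arccos (by rw [le_div_iff₀ h]; linarith) (by rw [div_le_iff₀ h]; linarith),
      Real.sin_arccos]
    have : √(1 - (x / m) ^ 2) = y / m := by
      rw [show 1 - (x / m) ^ 2 = (y / m) ^ 2 by field_simp; linarith]
      exact Real.sqrt_sq (by positivity)
    rw [this]; field_simp; linarith

lemma circ_bound (x y : ℝ) : (cos x - cos y) ^ 2 + (sin x - sin y) ^ 2 ≤ (x - y) ^ 2 := by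
  have := Real.one_sub_sq_div_two_le_cos (x := x - y)
  rw [Real.cos_sub] at this
  nlinarith [Real.sin_sq_add_cos_sq x, Real.sin_sq_add_cos_sq y]

lemma lip_of_sq {f : ℝ → E3} (h : ∀ x y, ‖f x - f y‖ ^ 2 ≤ (x - y) ^ 2) : LipschitzWith 1 f := by
  apply LipschitzWith.of_dist_le_mul
  intro x y
  rw [dist_eq_norm, Real.dist_eq, NNReal.coe_one, one_mul]
  have := sq_le_sq.1 (h x y)
  rwa [abs_norm] at this

lemma norm_sq3 (x : E3) : ‖x‖ ^ 2 = x 0 ^ 2 + x 1 ^ 2 + x 2 ^ 2 := by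
  rw [EuclideanSpace.norm_sq_eq, Fin.sum_univ_three]; simp

lemma inner3 (x y : E3) : ⟪x, y⟫ = x 0 * y 0 + x 1 * y 1 + x 2 * y 2 := by
  simp [PiLp.inner_apply, Fin.sum_univ_three, mul_comm]

lemma add_sqrt_ge_one {a b c : ℝ} (h : a ^ 2 + b ^ 2 + c ^ 2 = 1) (ha : 0 ≤ a) :
    1 ≤ a + √(b ^ 2 + c ^ 2) := by
  have h1 := Real.sq_sqrt (show 0 ≤ b ^ 2 + c ^ 2 by positivity)
  have h2 := Real.sqrt_nonneg (b ^ 2 + c ^ 2)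
  nlinarith [mul_nonneg ha h2]

/-- L6 -/
lemma IsMinimalInspection.le_four_pi {a b : ℝ} {γ : ℝ → E3} (h : IsMinimalInspection a b γ) :
    eVariationOn γ (Icc a b) ≤ ENNReal.ofReal (4 * π) := by
  have l1 : LipschitzWith 1 (fun t : ℝ => (!₂[1, -cos t, sin t] : E3)) := lip_of_sq fun x y => by
    rw [norm_sq3]; simp; nlinarith [circ_bound x y]
  have l2 : LipschitzWith 1 (fun t : ℝ => (!₂[cos t, 1, -sin t] : E3)) := lip_of_sq fun x y => by
    rw [norm_sq3]; simp; nlinarith [circ_bound x y]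
  have l3 : LipschitzWith 1 (fun t : ℝ => (!₂[-1, cos t, sin t] : E3)) := lip_of_sq fun x y => by
    rw [norm_sq3]; simp; nlinarith [circ_bound x y]
  have l4 : LipschitzWith 1 (fun t : ℝ => (!₂[-cos t, -1, -sin t] : E3)) := lip_of_sq fun x y => by
    rw [norm_sq3]; simp; nlinarith [circ_bound x y]
  have a1 := Arc.of_lip Real.pi_pos.le l1
  have a2 := Arc.of_lip Real.pi_pos.le l2
  have a3 := Arc.of_lip Real.pi_pos.le l3
  have a4 := Arc.of_lip Real.pi_pos.le l4
  simp only [cos_zero, sin_zero, cos_pi, sin_pi, neg_neg, neg_zero] at a1 a2 a3 a4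
  have A := ((a1.trans a2).trans a3).trans a4
  refine (h.le_of_arc A ?_).trans ?_
  · intro u hu
    have hu2 : u 0 ^ 2 + u 1 ^ 2 + u 2 ^ 2 = 1 := by rw [← norm_sq3, hu]; norm_num
    rcases le_total 0 (u 2) with hc | hc
    · rcases le_total 0 (u 0) with ha | ha
      · obtain ⟨t, ht, he⟩ := exists_angle (-u 1) (u 2) hc
        refine ⟨_, Or.inl (Or.inl (Or.inl ⟨t, ht, rfl⟩)), ?_⟩
        have := add_sqrt_ge_one (a := u 0) (b := -u 1) (c := u 2) (by nlinarith) ha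
        rw [inner3]; simp; linarith
      · obtain ⟨t, ht, he⟩ := exists_angle (u 1) (u 2) hc
        refine ⟨_, Or.inl (Or.inr ⟨t, ht, rfl⟩), ?_⟩
        have := add_sqrt_ge_one (a := -u 0) (b := u 1) (c := u 2) (by nlinarith) (by linarith)
        rw [inner3]; simp; linarith
    · rcases le_total 0 (u 1) with ha | ha
      · obtain ⟨t, ht, he⟩ := exists_angle (u 0) (-u 2) (by linarith)
        refine ⟨_, Or.inl (Or.inl (Or.inr ⟨t, ht, rfl⟩)), ?_⟩
        have := add_sqrt_ge_one (a := u 1) (b := u 0) (c := -u 2) (by nlinarith) ha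
        rw [inner3]; simp; linarith
      · obtain ⟨t, ht, he⟩ := exists_angle (-u 0) (-u 2) (by linarith)
        refine ⟨_, Or.inr ⟨t, ht, rfl⟩, ?_⟩
        have := add_sqrt_ge_one (a := -u 1) (b := -u 0) (c := -u 2) (by nlinarith) (by linarith)
        rw [inner3]; simp; linarith
  · simp only [sub_zero, ENNReal.coe_one, one_mul]
    rw [← ENNReal.ofReal_add, ← ENNReal.ofReal_add, ← ENNReal.ofReal_add] <;> first | positivity | skip
    apply le_of_eq; congr 1; ring


lemma straight_aux {p X Y : E3} {C x y : ℝ} (hC : 0 ≤ C) (hx : 0 ≤ x) (hxy : x ≤ y)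
    (h1 : ‖X - p‖ ≤ C * x) (h2 : ‖Y - X‖ ≤ C * (y - x)) (h3 : C * y ≤ ‖Y - p‖) :
    y • (X - p) = x • (Y - p) := by
  have hy : 0 ≤ y := hx.trans hxy
  rw [← sub_eq_zero, ← norm_eq_zero, ← sq_eq_zero_iff]
  have e1 : ‖y • (X - p) - x • (Y - p)‖ ^ 2 =
      y ^ 2 * ‖X - p‖ ^ 2 - 2 * x * y * ⟪X - p, Y - p⟫ + x ^ 2 * ‖Y - p‖ ^ 2 := by
    rw [norm_sub_sq_real, norm_smul, norm_smul, inner_smul_left, inner_smul_right]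
    simp [mul_pow]; ring
  have e2 : ‖Y - X‖ ^ 2 = ‖Y - p‖ ^ 2 - 2 * ⟪X - p, Y - p⟫ + ‖X - p‖ ^ 2 := by
    rw [show Y - X = (Y - p) - (X - p) by abel, norm_sub_sq_real, real_inner_comm]
  have i1 : ‖X - p‖ ^ 2 ≤ (C * x) ^ 2 := pow_le_pow_left₀ (norm_nonneg _) h1 2
  have i2 : ‖Y - X‖ ^ 2 ≤ (C * (y - x)) ^ 2 := pow_le_pow_left₀ (norm_nonneg _) h2 2
  have i3 : (C * y) ^ 2 ≤ ‖Y - p‖ ^ 2 := pow_le_pow_left₀ (by positivity) h3 2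
  apply le_antisymm _ (sq_nonneg _)
  rw [e1]
  have hd : 0 ≤ y - x := by linarith
  have j1 := mul_le_mul_of_nonneg_left i1 (mul_nonneg hy hd)
  have j3 := mul_le_mul_of_nonneg_left i3 (mul_nonneg hx hd)
  have j2 := mul_le_mul_of_nonneg_left i2 (mul_nonneg hx hy)
  rw [e2] at j2
  nlinarith

lemma redundant_aux {p q v u : E3} {z s₀ : ℝ} (hz : 0 ≤ z) (hzs : z < s₀) (hu : ‖u‖ = 1)
    (h : ‖q - (p + z • v)‖ ≤ z / s₀ * (1 - ‖p + s₀ • v‖)) (hq : 1 ≤ ⟪q, u⟫) : 1 ≤ ⟪p, u⟫ := by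
  have hs : 0 < s₀ := by linarith
  have e1 : ⟪q, u⟫ = ⟪q - (p + z • v), u⟫ + (⟪p, u⟫ + z * ⟪v, u⟫) := by
    rw [inner_sub_left, inner_add_left, inner_smul_left]; simp
  have e2 : ⟪p + s₀ • v, u⟫ = ⟪p, u⟫ + s₀ * ⟪v, u⟫ := by
    rw [inner_add_left, inner_smul_left]; simp
  have i1 := real_inner_le_norm (q - (p + z • v)) u
  have i2 := real_inner_le_norm (p + s₀ • v) u
  rw [hu, mul_one] at i1 i2
  set l := z / s₀ with hl
  have hzl : z = l * s₀ := by rw [hl]; field_simp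
  have hl0 : 0 ≤ l := by positivity
  have hl1 : l < 1 := by rw [hl, div_lt_one hs]; exact hzs
  have i3 := mul_le_mul_of_nonneg_left i2 hl0
  have e3 : z * ⟪v, u⟫ = l * (s₀ * ⟪v, u⟫) := by rw [hzl]; ring
  rw [e2] at i3
  by_contra! hc
  nlinarith

lemma core2 {ℓ : ℝ} {β : ℝ → E3} {C : ℝ≥0} (hmin : IsMinimalInspection 0 ℓ β)
    (hsp : HasConstantSpeedOnWith β (Icc 0 ℓ) C) (hball : ∀ t ∈ Icc 0 ℓ, 1 ≤ ‖β t‖)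
    {v : E3} (hv : v ≠ 0) (hd : HasDerivWithinAt β v (Icc 0 ℓ) 0) {s₀ : ℝ} (hs : 0 < s₀)
    (hlt : ‖β 0 + s₀ • v‖ < 1) : False := by
  have hℓ : 0 < ℓ := hmin.1.1
  have hcont : ContinuousOn β (Icc 0 ℓ) := hmin.1.2.1
  have hvar : ∀ x y, 0 ≤ x → x ≤ y → y ≤ ℓ →
      eVariationOn β (Icc x y) = ENNReal.ofReal (C * (y - x)) := by
    intro x y hx hxy hy
    have := hsp (x := x) ⟨hx, hxy.trans hy⟩ (y := y) ⟨hx.trans hxy, hy⟩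
    rwa [inter_eq_right.2 (Icc_subset_Icc hx hy)] at this
  have hdist : ∀ x y, 0 ≤ x → x ≤ y → y ≤ ℓ → ‖β y - β x‖ ≤ C * (y - x) := by
    intro x y hx hxy hy
    have := eVariationOn.edist_le β (s := Icc x y) (x := y) (y := x) ⟨hxy, le_rfl⟩ ⟨le_rfl, hxy⟩
    rw [hvar x y hx hxy hy, edist_dist, dist_eq_norm] at this
    exact (ENNReal.ofReal_le_ofReal_iff (mul_nonneg C.2 (by linarith))).1 this
  set p := β 0 with hp
  -- straightness
  have hstr : ∀ y, 0 ≤ y → y ≤ ℓ → C * y ≤ ‖β y - p‖ → ∀ x, 0 ≤ x → x ≤ y → β x = p + x • v := by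
    intro y hy hyl h x hx hxy
    have hlin : ∀ x, 0 ≤ x → x ≤ y → y • (β x - p) = x • (β y - p) := by
      intro x hx hxy
      apply straight_aux C.2 hx hxy _ (hdist x y hx hxy hyl) h
      have := hdist 0 x le_rfl hx (hxy.trans hyl)
      simpa using this
    rcases hy.eq_or_lt with h0 | h0
    · have : x = 0 := by linarith
      simp [this, hp]
    · have hlin2 : ∀ x, 0 ≤ x → x ≤ y → β x = p + x • (y⁻¹ • (β y - p)) := by
        intro x hx hxy
        have := congrArg (fun w => y⁻¹ • w) (hlin x hx hxy)
        simp only [smul_smul, inv_mul_cancel₀ h0.ne', one_smul] at this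
        rw [mul_comm, ← smul_smul] at this
        rw [← this]; abel
      have hd1 : HasDerivWithinAt β (y⁻¹ • (β y - p)) (Icc 0 y) 0 := by
        have hg : HasDerivWithinAt (fun x : ℝ => p + x • (y⁻¹ • (β y - p)))
            ((1 : ℝ) • (y⁻¹ • (β y - p))) (Icc 0 y) 0 :=
          ((hasDerivWithinAt_id (0 : ℝ) (Icc 0 y)).smul_const _).const_add _
        rw [one_smul] at hg
        exact hg.congr (fun x hx => hlin2 x hx.1 hx.2) (by simp [hp])
      have hd2 : HasDerivWithinAt β v (Icc 0 y) 0 := hd.mono (Icc_subset_Icc le_rfl hyl)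
      have hu : UniqueDiffWithinAt ℝ (Icc 0 y) (0 : ℝ) :=
        uniqueDiffOn_Icc h0 0 ⟨le_rfl, hy⟩
      have : y⁻¹ • (β y - p) = v := hu.eq_deriv _ hd1 hd2
      rw [← this]; exact hlin2 x hx hxy
  set m := min ℓ s₀ with hm
  have hm0 : 0 < m := lt_min hℓ hs
  set η := 1 - ‖p + s₀ • v‖ with hη
  have hη0 : 0 < η := by linarith
  have hkey : Icc 0 m ⊆ {x : ℝ | C * x ≤ ‖β x - p‖} := by
    apply IsClosed.Icc_subset_of_forall_exists_gt
    · have hc : ContinuousOn (fun x => ‖β x - p‖ - C * x) (Icc 0 m) := by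
        have := hcont.mono (Icc_subset_Icc (le_refl (0:ℝ)) (min_le_left ℓ s₀))
        fun_prop
      have := hc.preimage_isClosed_of_isClosed isClosed_Icc (isClosed_Ici (a := (0:ℝ)))
      convert this using 1
      ext x; simp [and_comm]
    · simp
    · rintro x ⟨hxs, hx0, hxm⟩ y hy
      simp only [mem_ofPred_eq] at hxs
      have hxl : x < ℓ := hxm.trans_le (min_le_left _ _)
      have hst := hstr x hx0 hxl.le hxs
      -- nearby
      have hnear : ∃ δ > 0, ∀ z, x ≤ z → z < x + δ → z ≤ ℓ →
          ‖β z - (p + z • v)‖ ≤ z / s₀ * η := by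
        rcases hx0.eq_or_lt with h0 | h0
        · subst h0
          have := hd.isLittleO.def (c := η / s₀) (by positivity)
          rw [eventually_nhdsWithin_iff, Metric.eventually_nhds_iff] at this
          obtain ⟨δ, hδ, H⟩ := this
          refine ⟨δ, hδ, fun z hz hz1 hzl => ?_⟩
          have := H (y := z) (by rw [Real.dist_eq, sub_zero, abs_of_nonneg hz]; linarith) ⟨hz, hzl⟩
          simp only [sub_zero, Real.norm_eq_abs, abs_of_nonneg hz] at this
          rw [← sub_sub]
          calc _ ≤ η / s₀ * z := this
            _ = _ := by ring
        · have hc : ContinuousOn (fun z => ‖β z - (p + z • v)‖ - z / s₀ * η) (Icc 0 ℓ) := by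
            fun_prop
          have hneg : ‖β x - (p + x • v)‖ - x / s₀ * η < 0 := by
            rw [hst x hx0 le_rfl]; simp; positivity
          have h1 := (hc x ⟨hx0, hxl.le⟩).tendsto.eventually (Iio_mem_nhds hneg)
          rw [eventually_nhdsWithin_iff, Metric.eventually_nhds_iff] at h1
          obtain ⟨δ, hδ, H⟩ := h1
          refine ⟨δ, hδ, fun z hz hz1 hzl => ?_⟩
          have := H (y := z) (by rw [Real.dist_eq, abs_of_nonneg (by linarith)]; linarith)
            ⟨hx0.trans hz, hzl⟩
          linarith
      obtain ⟨δ, hδ, H⟩ := hnear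
      obtain ⟨y', hy1, hy2⟩ := exists_between
        (show x < min (min y m) (x + δ) from lt_min (lt_min hy hxm) (by linarith))
      rw [lt_min_iff, lt_min_iff] at hy2
      obtain ⟨⟨hyy, hym⟩, hyd⟩ := hy2
      have hyl : y' ≤ ℓ := hym.le.trans (min_le_left _ _)
      have hy'0 : 0 ≤ y' := by linarith
      refine ⟨y', ?_, hy1, hyy.le⟩
      -- all points of the initial arc are redundant
      have hred : ∀ z ∈ Icc 0 y', ∀ u : E3, ‖u‖ = 1 → 1 ≤ ⟪β z, u⟫ → 1 ≤ ⟪p, u⟫ := by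
        intro z hz u hu h1
        have hzs : z < s₀ := hz.2.trans_lt (hym.trans_le (min_le_right _ _))
        refine redundant_aux (v := v) hz.1 hzs hu ?_ h1
        rcases le_total z x with h | h
        · rw [hst z hz.1 h]; simp
          exact mul_nonneg (div_nonneg hz.1 hs.le) hη0.le
        · exact H z h (by linarith [hz.2]) (hz.2.trans hyl)
      have hA := (Arc.seg p (β y')).trans
        (Arc.of_curve hyl (hcont.mono (Icc_subset_Icc hy'0 le_rfl)))
      rw [← hmin.1.2.2.1] at hA
      have hle := hmin.le_of_arc hA (by
        intro u hu
        obtain ⟨_, ⟨z, hz, rfl⟩, h1⟩ := hmin.1.sees u hu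
        rcases le_total z y' with h | h
        · exact ⟨p, Or.inl (Or.inl rfl), hred z ⟨hz.1, h⟩ u hu h1⟩
        · exact ⟨β z, Or.inr ⟨z, ⟨h, hz.2⟩, rfl⟩, h1⟩)
      have hnn : 0 ≤ (C : ℝ) * (ℓ - y') := mul_nonneg C.2 (by linarith)
      rw [hvar 0 ℓ le_rfl hℓ.le le_rfl, hvar y' ℓ hy'0 hyl le_rfl,
        ← ENNReal.ofReal_add (norm_nonneg _) hnn,
        ENNReal.ofReal_le_ofReal_iff (add_nonneg (norm_nonneg _) hnn)] at hle
      simp only [mem_ofPred_eq]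
      linarith
  have hmm := hkey ⟨hm0.le, le_rfl⟩
  have hfin := hstr m hm0.le (min_le_left _ _) hmm m hm0.le le_rfl
  rcases min_choice ℓ s₀ with h | h
  · rw [hm, h, ← hmin.1.2.2.1, ← hp, left_eq_add, smul_eq_zero] at hfin
    rcases hfin with h | h
    · exact hℓ.ne' h
    · exact hv h
  · have := hball m ⟨hm0.le, min_le_left _ _⟩
    rw [hfin, hm, h] at this
    linarith

lemma reverse_min {a b : ℝ} {γ : ℝ → E3} {C : ℝ≥0} (hmin : IsMinimalInspection a b γ)
    (hsp : HasConstantSpeedOnWith γ (Icc a b) C) :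
    IsMinimalInspection a b (fun t => γ (a + b - t)) ∧
      HasConstantSpeedOnWith (fun t => γ (a + b - t)) (Icc a b) C := by
  have himg : ∀ x y : ℝ, (fun t : ℝ => a + b - t) '' Icc x y = Icc (a + b - y) (a + b - x) :=
    fun x y => by simp
  have hvar : ∀ x y : ℝ, eVariationOn (fun t => γ (a + b - t)) (Icc x y) =
      eVariationOn γ (Icc (a + b - y) (a + b - x)) := by
    intro x y
    rw [← himg, ← eVariationOn.comp_eq_of_antitoneOn]
    · rfl
    · intro s _ t _ h; dsimp only; linarith
  have himg' : (fun t => γ (a + b - t)) '' Icc a b = γ '' Icc a b := by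
    have := himg a b
    simp only [add_sub_cancel_right, add_sub_cancel_left] at this
    nth_rewrite 2 [← this]; rw [image_image]
  have hv := hvar a b
  simp only [add_sub_cancel_right, add_sub_cancel_left] at hv
  obtain ⟨h1, h2, h3, h4, h5⟩ := hmin.1
  refine ⟨⟨⟨h1, ?_, ?_, ?_, ?_⟩, ?_⟩, ?_⟩
  · apply h2.comp (by fun_prop)
    intro t ht; constructor <;> linarith [ht.1, ht.2]
  · simp [h3]
  · rwa [hv]
  · rwa [himg']
  · rw [hv]; exact hmin.2
  · rw [hasConstantSpeedOnWith_iff_ordered]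
    intro x hx y hy hxy
    rw [inter_eq_right.2 (Icc_subset_Icc hx.1 hy.2), hvar]
    have hsub : Icc (a + b - y) (a + b - x) ⊆ Icc a b := Icc_subset_Icc (by linarith [hy.2])
      (by linarith [hx.1])
    have := hsp (x := a + b - y) (hsub ⟨le_rfl, by linarith⟩) (y := a + b - x)
      (hsub ⟨by linarith, le_rfl⟩)
    rw [inter_eq_right.2 hsub] at this
    rw [this]; congr 1; ring

lemma shift_min {a b c : ℝ} {γ : ℝ → E3} {C : ℝ≥0} (hmin : IsMinimalInspection a b γ)
    (hsp : HasConstantSpeedOnWith γ (Icc a b) C) (hc : c ∈ Icc a b) :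
    ∃ β, IsMinimalInspection 0 (b - a) β ∧ HasConstantSpeedOnWith β (Icc 0 (b - a)) C ∧
      (∀ s ∈ Icc 0 (b - c), β s = γ (c + s)) ∧ γ '' Icc a b = β '' Icc 0 (b - a) := by
  obtain ⟨h1, h2, h3, h4, h5⟩ := hmin.1
  let β : ℝ → E3 := fun s => if s ≤ b - c then γ (c + s) else γ (c + s - (b - a))
  have hbc : 0 ≤ b - c := by linarith [hc.2]
  have hbc' : b - c ≤ b - a := by linarith [hc.1]
  have E1 : EqOn β (fun s => γ (c + s)) (Icc 0 (b - c)) := fun s hs => by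
    simp only [β]; rw [if_pos hs.2]
  have E2 : EqOn β (fun s => γ (c - (b - a) + s)) (Icc (b - c) (b - a)) := fun s hs => by
    simp only [β]
    rcases hs.1.eq_or_lt with h | h
    · rw [if_pos h.ge, ← h]; simp only [add_sub_cancel]
      rw [show c - (b - a) + (b - c) = a by ring, h3]
    · rw [if_neg (not_le.2 h)]; congr 1; ring
  have hU : Icc 0 (b - a) = Icc 0 (b - c) ∪ Icc (b - c) (b - a) :=
    (Icc_union_Icc_eq_Icc hbc hbc').symm
  have hvar : ∀ k x y : ℝ, eVariationOn (fun t => γ (k + t)) (Icc x y) =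
      eVariationOn γ (Icc (k + x) (k + y)) := by
    intro k x y
    have : (fun t : ℝ => k + t) '' Icc x y = Icc (k + x) (k + y) := by simp [add_comm]
    rw [← this, ← eVariationOn.comp_eq_of_monotoneOn]
    · rfl
    · intro s _ t _ h; simpa using h
  have hspk : ∀ k x y : ℝ, Icc (k + x) (k + y) ⊆ Icc a b →
      HasConstantSpeedOnWith (fun t => γ (k + t)) (Icc x y) C := by
    intro k x y hsub
    rw [hasConstantSpeedOnWith_iff_ordered]
    intro x' hx y' hy hxy
    rw [inter_eq_right.2 (Icc_subset_Icc hx.1 hy.2), hvar]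
    have hsub' : Icc (k + x') (k + y') ⊆ Icc a b := by
      refine (Icc_subset_Icc ?_ ?_).trans hsub <;> linarith [hx.1, hy.2]
    have := hsp (x := k + x') (hsub' ⟨le_rfl, by linarith⟩) (y := k + y')
      (hsub' ⟨by linarith, le_rfl⟩)
    rw [inter_eq_right.2 hsub'] at this
    rw [this]; congr 1; ring
  have hcongr : ∀ {f g : ℝ → E3} {s : Set ℝ}, EqOn f g s → HasConstantSpeedOnWith g s C →
      HasConstantSpeedOnWith f s C := by
    intro f g s h hg x hx y hy
    rw [← hg hx hy]
    exact eVariationOn.congr (h.mono inter_subset_left)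
  have hspβ : HasConstantSpeedOnWith β (Icc 0 (b - a)) C := by
    apply HasConstantSpeedOnWith.Icc_Icc (y := b - c)
    · exact hcongr E1 (hspk _ _ _ (Icc_subset_Icc (by linarith [hc.1]) (by linarith)))
    · exact hcongr E2 (hspk _ _ _ (Icc_subset_Icc (by linarith) (by linarith [hc.2])))
  have hvβ : eVariationOn β (Icc 0 (b - a)) = eVariationOn γ (Icc a b) := by
    have e1 := hspβ (x := 0) ⟨le_rfl, by linarith⟩ (y := b - a) ⟨by linarith, le_rfl⟩
    have e2 := hsp (x := a) ⟨le_rfl, h1.le⟩ (y := b) ⟨h1.le, le_rfl⟩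
    rw [inter_self] at e1 e2
    rw [e1, e2, sub_zero]
  have him : γ '' Icc a b = β '' Icc 0 (b - a) := by
    have i1 : (fun s => γ (c + s)) '' Icc 0 (b - c) = γ '' Icc c b := by
      have : (fun t : ℝ => c + t) '' Icc 0 (b - c) = Icc c b := by simp
      rw [← this, image_image]
    have i2 : (fun s => γ (c - (b - a) + s)) '' Icc (b - c) (b - a) = γ '' Icc a c := by
      have : (fun t : ℝ => c - (b - a) + t) '' Icc (b - c) (b - a) = Icc a c := by
        simp
      rw [← this, image_image]
    rw [hU, image_union, E1.image_eq, E2.image_eq, i1, i2, ← Icc_union_Icc_eq_Icc hc.1 hc.2,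
      image_union, union_comm]
  refine ⟨β, ⟨⟨by linarith, ?_, ?_, ?_, ?_⟩, ?_⟩, hspβ, E1, him⟩
  · rw [hU]
    apply ContinuousOn.union_of_isClosed _ _ isClosed_Icc isClosed_Icc
    · refine ContinuousOn.congr (h2.comp (f := fun s => c + s) (by fun_prop) ?_) E1
      intro t ht; constructor <;> linarith [ht.1, ht.2, hc.1, hc.2]
    · refine ContinuousOn.congr (h2.comp (f := fun s => c - (b - a) + s) (by fun_prop) ?_) E2
      intro t ht; constructor <;> linarith [ht.1, ht.2, hc.1, hc.2]
  · rw [E1 ⟨le_rfl, hbc⟩, E2 ⟨hbc', le_rfl⟩]; simp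
  · rwa [hvβ]
  · rwa [← him]
  · rw [hvβ]; exact hmin.2

lemma part2_pos {a b : ℝ} {γ : ℝ → E3} {C : ℝ≥0} (hmin : IsMinimalInspection a b γ)
    (hsp : HasConstantSpeedOnWith γ (Icc a b) C) (hball : ∀ t ∈ Icc a b, 1 ≤ ‖γ t‖)
    {t : ℝ} (ht : t ∈ Ioo a b)
    {v : E3} (hv : v ≠ 0) (hd : HasDerivWithinAt γ v (Icc a b) t) {s₀ : ℝ} (hs : 0 < s₀) :
    1 ≤ ‖γ t + s₀ • v‖ := by
  by_contra! hlt
  obtain ⟨β, hm, hspβ, he, him⟩ := shift_min hmin hsp ⟨ht.1.le, ht.2.le⟩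
  have hbt : 0 < b - t := by linarith [ht.2]
  have h0 : β 0 = γ t := by rw [he 0 ⟨le_rfl, hbt.le⟩, add_zero]
  refine core2 hm hspβ ?_ hv ?_ hs (by rwa [h0])
  · intro s hs
    have : β s ∈ γ '' Icc a b := by rw [him]; exact ⟨s, hs, rfl⟩
    obtain ⟨r, hr, h⟩ := this
    rw [← h]; exact hball r hr
  · have hg : HasDerivWithinAt (fun s => γ (t + s)) v (Icc 0 (b - t)) 0 := by
      have hh : HasDerivWithinAt (fun s : ℝ => t + s) 1 (Icc 0 (b - t)) 0 :=
        (hasDerivWithinAt_id (0 : ℝ) _).const_add t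
      have hd' : HasDerivWithinAt γ v (Icc a b) (t + 0) := by simpa using hd
      have := HasDerivWithinAt.scomp (0 : ℝ) hd' hh (by
        intro s hs; constructor <;> linarith [hs.1, hs.2, ht.1])
      rw [one_smul] at this
      exact this
    have hb : HasDerivWithinAt β v (Icc 0 (b - t)) 0 :=
      hg.congr (fun s hs => he s hs) (by simp [h0])
    apply hb.mono_of_mem_nhdsWithin
    rw [mem_nhdsWithin]
    refine ⟨Iio (b - t), isOpen_Iio, hbt, fun s hs => ⟨hs.2.1, le_of_lt hs.1⟩⟩

lemma part2 {a b : ℝ} {γ : ℝ → E3} {C : ℝ≥0} (hmin : IsMinimalInspection a b γ)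
    (hsp : HasConstantSpeedOnWith γ (Icc a b) C) (hball : ∀ t ∈ Icc a b, 1 ≤ ‖γ t‖)
    {t : ℝ} (ht : t ∈ Ioo a b)
    {v : E3} (hv : v ≠ 0) (hd : HasDerivWithinAt γ v (Icc a b) t) (s : ℝ) :
    1 ≤ ‖γ t + s • v‖ := by
  rcases lt_trichotomy s 0 with h | h | h
  · obtain ⟨hm, hspr⟩ := reverse_min hmin hsp
    have hd' : HasDerivWithinAt (fun r => γ (a + b - r)) (-v) (Icc a b) (a + b - t) := by
      have hh : HasDerivWithinAt (fun r : ℝ => a + b - r) (-1) (Icc a b) (a + b - t) :=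
        (hasDerivWithinAt_id (a + b - t) _).const_sub (a + b)
      have hd' : HasDerivWithinAt γ v (Icc a b) (a + b - (a + b - t)) := by simpa using hd
      have := HasDerivWithinAt.scomp (a + b - t) hd' hh (by
        intro s hs; constructor <;> linarith [hs.1, hs.2])
      rw [neg_one_smul] at this
      exact this
    have := part2_pos hm hspr (fun r hr => hball _ (by constructor <;> linarith [hr.1, hr.2]))
      (t := a + b - t) (by constructor <;> linarith [ht.1, ht.2]) (neg_ne_zero.2 hv) hd'
      (s₀ := -s) (by linarith)
    simpa using this
  · simpa [h] using hball t ⟨ht.1.le, ht.2.le⟩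
  · exact part2_pos hmin hsp hball ht hv hd h

theorem final_of_part1 (a b : ℝ) (γ : ℝ → E3) (C : ℝ≥0)
    (hmin : IsMinimalInspection a b γ)
    (hspeed : HasConstantSpeedOnWith γ (Set.Icc a b) C)
    (P1 : ∀ t ∈ Set.Icc a b, 1 ≤ ‖γ t‖) :
    (∀ᵐ t ∂(volume.restrict (Set.Icc a b)), ∀ v : E3, v ≠ 0 →
      HasDerivWithinAt γ v (Set.Icc a b) t →
        (∀ s : ℝ, 1 ≤ ‖γ t + s • v‖) ∧
          ⟪γ t, v⟫ ^ 2 ≤ ‖v‖ ^ 2 * (‖γ t‖ ^ 2 - 1)) := by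
  rw [← restrict_Ioo_eq_restrict_Icc]
  filter_upwards [ae_restrict_mem measurableSet_Ioo] with t ht v hv hd
  have key := part2 hmin hspeed P1 ht hv hd
  refine ⟨key, ?_⟩
  have hn : 0 < ‖v‖ := norm_pos_iff.2 hv
  have h1 := key (-(⟪γ t, v⟫ / ‖v‖ ^ 2))
  have h2 : 1 ≤ ‖γ t + (-(⟪γ t, v⟫ / ‖v‖ ^ 2)) • v‖ ^ 2 := one_le_pow₀ h1
  rw [norm_add_sq_real, norm_smul, inner_smul_right, mul_pow, Real.norm_eq_abs, sq_abs] at h2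
  have h3 : ‖γ t‖ ^ 2 + 2 * (-(⟪γ t, v⟫ / ‖v‖ ^ 2) * ⟪γ t, v⟫) +
      (-(⟪γ t, v⟫ / ‖v‖ ^ 2)) ^ 2 * ‖v‖ ^ 2 = ‖γ t‖ ^ 2 - ⟪γ t, v⟫ ^ 2 / ‖v‖ ^ 2 := by
    field_simp; ring
  rw [h3] at h2
  have h4 : ⟪γ t, v⟫ ^ 2 / ‖v‖ ^ 2 ≤ ‖γ t‖ ^ 2 - 1 := by linarith
  rw [div_le_iff₀ (by positivity)] at h4
  linarith


/-- part of the unit ball over the spherical cap seen from `x` -/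
def Cap (x : E3) : Set E3 := {w | ‖w‖ < 1 ∧ ‖w‖ ≤ ⟪x, w⟫}

def Pos (v : E3) : Set E3 := {w | 0 < ⟪v, w⟫}
def Neg' (v : E3) : Set E3 := {w | ⟪v, w⟫ < 0}

def TT (x v : E3) : ℝ := (volume.real (Cap x ∩ Pos v) - volume.real (Cap x ∩ Neg' v)) / 2

lemma meas_Cap (x : E3) : MeasurableSet (Cap x) := by
  have h1 : MeasurableSet {w : E3 | ‖w‖ < 1} := measurableSet_lt (by fun_prop) (by fun_prop)
  have h2 : MeasurableSet {w : E3 | ‖w‖ ≤ ⟪x, w⟫} := measurableSet_le (by fun_prop) (by fun_prop)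
  exact h1.inter h2

lemma meas_Pos (v : E3) : MeasurableSet (Pos v) := measurableSet_lt (by fun_prop) (by fun_prop)
lemma meas_Neg (v : E3) : MeasurableSet (Neg' v) := measurableSet_lt (by fun_prop) (by fun_prop)

lemma Cap_sub (x : E3) : Cap x ⊆ Metric.ball 0 1 := fun w hw => by simpa using hw.1

lemma fin_of_sub_Cap {x : E3} {S : Set E3} (h : S ⊆ Cap x) : volume S ≠ ∞ :=
  ((measure_mono (h.trans (Cap_sub x))).trans_lt measure_ball_lt_top).ne

lemma key_K (x v : E3) {s : ℝ} (hs : 0 ≤ s) :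
    volume.real (symmDiff (Cap x) (Cap (x + s • v))) ≤ 2 * (TT (x + s • v) v - TT x v) := by
  set y := x + s • v with hy
  have hin : ∀ w, ⟪y, w⟫ = ⟪x, w⟫ + s * ⟪v, w⟫ := fun w => by
    rw [hy, inner_add_left, inner_smul_left]; simp
  have h1 : Cap x ∩ Pos v ⊆ Cap y ∩ Pos v := by
    rintro w ⟨⟨a, b⟩, c⟩
    exact ⟨⟨a, by rw [hin]; nlinarith [show 0 < ⟪v, w⟫ from c, mul_nonneg hs (le_of_lt c)]⟩, c⟩
  have h2 : Cap y ∩ Neg' v ⊆ Cap x ∩ Neg' v := by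
    rintro w ⟨⟨a, b⟩, c⟩
    rw [hin] at b
    have c' : ⟪v, w⟫ < 0 := c
    exact ⟨⟨a, by nlinarith [mul_nonneg hs (neg_nonneg.2 c'.le)]⟩, c⟩
  have hsub : symmDiff (Cap x) (Cap y) ⊆
      ((Cap y ∩ Pos v) \ (Cap x ∩ Pos v)) ∪ ((Cap x ∩ Neg' v) \ (Cap y ∩ Neg' v)) := by
    intro w hw
    have hw' : (w ∈ Cap x ∧ w ∉ Cap y) ∨ (w ∈ Cap y ∧ w ∉ Cap x) := hw
    rcases lt_trichotomy 0 ⟪v, w⟫ with h | h | h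
    · left
      rcases hw' with ⟨a, b⟩ | ⟨a, b⟩
      · exact absurd (h1 ⟨a, h⟩).1 b
      · exact ⟨⟨a, h⟩, fun h' => b h'.1⟩
    · exfalso
      have : w ∈ Cap x ↔ w ∈ Cap y := by
        simp only [Cap, mem_ofPred_eq, hin, ← h]; simp
      tauto
    · right
      rcases hw' with ⟨a, b⟩ | ⟨a, b⟩
      · exact ⟨⟨a, h⟩, fun h' => b h'.1⟩
      · exact absurd (h2 ⟨a, h⟩).1 b
  have f1 : volume (Cap y ∩ Pos v) ≠ ∞ := fin_of_sub_Cap inter_subset_left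
  have f2 : volume (Cap x ∩ Neg' v) ≠ ∞ := fin_of_sub_Cap inter_subset_left
  have e1 := measureReal_sdiff (μ := (volume : Measure E3)) h1 ((meas_Cap x).inter (meas_Pos v)) f1
  have e2 := measureReal_sdiff (μ := (volume : Measure E3)) h2 ((meas_Cap y).inter (meas_Neg v)) f2
  calc _ ≤ _ := measureReal_mono hsub (by
        apply (measure_union_lt_top _ _).ne
        · exact (measure_mono sdiff_subset).trans_lt f1.lt_top
        · exact (measure_mono sdiff_subset).trans_lt f2.lt_top)
    _ ≤ _ := measureReal_union_le _ _
    _ = _ := by rw [e1, e2]; simp only [TT]; ring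

lemma TT_small {x : E3} (hx : ‖x‖ < 1) (v : E3) : TT x v = 0 := by
  have h : ∀ w ∈ Cap x, w = 0 := by
    rintro w ⟨_, h⟩
    have := real_inner_le_norm x w
    by_contra hw
    have : 0 < ‖w‖ := norm_pos_iff.2 hw
    nlinarith
  have h1 : Cap x ∩ Pos v = ∅ := by
    ext w; simp only [mem_inter_iff, mem_empty_iff_false, iff_false]
    rintro ⟨a, b⟩; simp [Pos, h w a] at b
  have h2 : Cap x ∩ Neg' v = ∅ := by
    ext w; simp only [mem_inter_iff, mem_empty_iff_false, iff_false]
    rintro ⟨a, b⟩; simp [Neg', h w a] at b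
  simp [TT, h1, h2]

lemma TT_isometry (Φ : E3 ≃ₗᵢ[ℝ] E3) (x v : E3) : TT (Φ x) (Φ v) = TT x v := by
  have hm := Φ.measurePreserving
  have e1 : Φ ⁻¹' (Cap (Φ x) ∩ Pos (Φ v)) = Cap x ∩ Pos v := by
    ext w; simp [Cap, Pos]
  have e2 : Φ ⁻¹' (Cap (Φ x) ∩ Neg' (Φ v)) = Cap x ∩ Neg' v := by
    ext w; simp [Cap, Neg']
  simp only [TT, ← e1, ← e2]
  rw [hm.measureReal_preimage ((meas_Cap _).inter (meas_Pos _)).nullMeasurableSet,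
    hm.measureReal_preimage ((meas_Cap _).inter (meas_Neg _)).nullMeasurableSet]

/-- for any x and unit v there are orthonormal e f with x = r e, v = sin ψ e - cos ψ f -/
lemma exists_frame {x v : E3} (hx : x ≠ 0) (hv : ‖v‖ = 1) : ∃ Φ : E3 ≃ₗᵢ[ℝ] E3,
    Φ x = !₂[‖x‖, 0, 0] ∧
    Φ v = !₂[sin (arcsin (⟪x, v⟫ / ‖x‖)), -cos (arcsin (⟪x, v⟫ / ‖x‖)), 0] := by
  have hx0 : 0 < ‖x‖ := norm_pos_iff.2 hx
  set e := ‖x‖⁻¹ • x with he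
  have hxe : x = ‖x‖ • e := by rw [he, smul_smul, mul_inv_cancel₀ hx0.ne', one_smul]
  have hen : ‖e‖ = 1 := by rw [he, norm_smul, norm_inv, norm_norm, inv_mul_cancel₀ hx0.ne']
  set c := ⟪e, v⟫ with hc
  have hcx : ⟪x, v⟫ / ‖x‖ = c := by
    rw [hc, he, inner_smul_left]; simp; field_simp
  have hc1 : |c| ≤ 1 := by
    have := abs_real_inner_le_norm e v
    rwa [hen, hv, one_mul] at this
  have hc2 := abs_le.1 hc1
  rw [hcx, Real.sin_arcsin hc2.1 hc2.2, Real.cos_arcsin]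
  set d := √(1 - c ^ 2) with hd
  have hd2 : d ^ 2 = 1 - c ^ 2 := Real.sq_sqrt (by nlinarith)
  set g := v - c • e with hg
  have hge : ⟪e, g⟫ = 0 := by
    rw [hg, inner_sub_right, inner_smul_right, real_inner_self_eq_norm_sq, hen, ← hc]; ring
  have hgn : ‖g‖ ^ 2 = d ^ 2 := by
    rw [hg, norm_sub_sq_real, inner_smul_right, norm_smul, real_inner_comm, ← hc, hv, hen, hd2]
    simp; ring
  have hgd : ‖g‖ = d := by
    rwa [sq_eq_sq₀ (norm_nonneg _) (Real.sqrt_nonneg _)] at hgn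
  -- choose f
  obtain ⟨f, hf1, hf2, hf3⟩ : ∃ f : E3, ‖f‖ = 1 ∧ ⟪e, f⟫ = 0 ∧ v = c • e + d • f := by
    by_cases h0 : d = 0
    · have hg0 : g = 0 := by rw [← norm_eq_zero, hgd, h0]
      have hfr : Module.finrank ℝ (Submodule.span ℝ {e})ᗮ = 2 := by
        have := Submodule.finrank_add_finrank_orthogonal (Submodule.span ℝ {e})
        rw [finrank_span_singleton (by rw [← norm_ne_zero_iff, hen]; norm_num)] at this
        simp at this; omega
      have : Nontrivial (Submodule.span ℝ {e})ᗮ := Module.nontrivial_of_finrank_pos (R := ℝ)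
        (by omega)
      obtain ⟨⟨f, hf⟩, hfn⟩ := exists_norm_eq (Submodule.span ℝ {e})ᗮ (zero_le_one (α := ℝ))
      refine ⟨f, by simpa using hfn, ?_, ?_⟩
      · exact Submodule.mem_orthogonal_singleton_iff_inner_right.1 hf
      · rw [h0, zero_smul, add_zero, ← sub_eq_zero]; exact hg0
    · refine ⟨d⁻¹ • g, ?_, ?_, ?_⟩
      · rw [norm_smul, hgd, norm_inv, Real.norm_of_nonneg (Real.sqrt_nonneg _), inv_mul_cancel₀ h0]
      · rw [inner_smul_right, hge, mul_zero]
      · rw [smul_smul d, mul_inv_cancel₀ h0, one_smul, hg]; abel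
  let b0 : Fin 3 → E3 := ![e, -f, 0]
  have hon : Orthonormal ℝ (({0, 1} : Set (Fin 3)).domRestrict b0) := by
    constructor
    · rintro ⟨i, (rfl | rfl)⟩
      · exact hen
      · exact (norm_neg f).trans hf1
    · rintro ⟨i, (rfl | rfl)⟩ ⟨j, (rfl | rfl)⟩ hij
      · simp at hij
      · exact (inner_neg_right e f).trans (by rw [hf2, neg_zero])
      · exact (inner_neg_left f e).trans (by rw [real_inner_comm, hf2, neg_zero])
      · simp at hij
  obtain ⟨b, hb⟩ := hon.exists_orthonormalBasis_extension_of_card_eq (by simp)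
  have hb0 : b 0 = e := by rw [hb 0 (by simp)]; simp [b0]
  have hb1 : b 1 = -f := by rw [hb 1 (by simp)]; simp [b0]
  refine ⟨b.repr, ?_, ?_⟩
  · conv_lhs => rw [hxe, ← hb0]
    ext i; fin_cases i <;> simp
  · conv_lhs => rw [hf3, ← hb0, ← neg_neg f, ← hb1]
    ext i; fin_cases i <;> simp


def sec (q : ℝ) : Set (ℝ × ℝ) :=
  {p | 0 < p.2 ∧ p.2 ^ 2 + p.1 ^ 2 < 1 ∧ √(p.2 ^ 2 + p.1 ^ 2) ≤ q * p.2}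

lemma lint_of_int {f : ℝ → ℝ} {l u : ℝ} (h : l ≤ u) (hf : Continuous f)
    (hnn : ∀ t ∈ Icc l u, 0 ≤ f t) :
    ∫⁻ t in Icc l u, ENNReal.ofReal (f t) = ENNReal.ofReal (∫ t in l..u, f t) := by
  rw [intervalIntegral.integral_of_le h, ← integral_Icc_eq_integral_Ioc,
    ofReal_integral_eq_lintegral_ofReal]
  · exact hf.integrableOn_Icc
  · filter_upwards [ae_restrict_mem measurableSet_Icc] with t ht using hnn t ht

lemma sec_cond {q z ρ : ℝ} (h : (z, ρ) ∈ sec q) : 0 < ρ ∧ ρ ^ 2 < 1 - z ^ 2 ∧ 1 ≤ q ∧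
    z ^ 2 ≤ (q ^ 2 - 1) * ρ ^ 2 := by
  obtain ⟨h1, h2, h3⟩ := h
  dsimp only at h1 h2 h3
  have hq : 0 ≤ q * ρ := (Real.sqrt_nonneg _).trans h3
  rw [Real.sqrt_le_left hq] at h3
  have hq0 : 0 ≤ q := by
    by_contra! hc; nlinarith
  refine ⟨h1, by linarith, ?_, by nlinarith⟩
  by_contra! hc
  have : q ^ 2 < 1 := by nlinarith
  nlinarith [mul_pos h1 h1, sq_nonneg z, mul_nonneg hq0 hq0]

lemma sec_area (q : ℝ) :
    ∫⁻ z : ℝ, ∫⁻ ρ : ℝ, (sec q).indicator (fun p => ENNReal.ofReal p.2) (z, ρ) ≤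
      ENNReal.ofReal (2 / 3 * (√(q ^ 2 - 1) / q)) := by
  rcases le_or_gt q 1 with hq | hq
  · have : ∀ᵐ z : ℝ, ∫⁻ ρ : ℝ, (sec q).indicator (fun p => ENNReal.ofReal p.2) (z, ρ) = 0 := by
      have h0 : ∀ᵐ z : ℝ, z ≠ 0 := by simp [ae_iff]
      filter_upwards [h0] with z hz
      rw [lintegral_eq_zero_of_ae_eq_zero]
      filter_upwards with ρ
      apply indicator_of_notMem
      intro hm
      obtain ⟨h1, h2, h3, h4⟩ := sec_cond hm
      have : q = 1 := le_antisymm hq h3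
      have : 0 < z ^ 2 := by positivity
      subst q; norm_num at h4; contradiction
    rw [lintegral_congr_ae this]; simp
  · set s := √(q ^ 2 - 1) / q with hs
    have hq2 : 0 < q ^ 2 - 1 := by nlinarith
    set k := √(q ^ 2 - 1) with hk
    have hk2 : k ^ 2 = q ^ 2 - 1 := Real.sq_sqrt hq2.le
    have hk0 : 0 < k := Real.sqrt_pos.2 hq2
    have hs0 : 0 < s := by positivity
    have hs2 : s ^ 2 = (q ^ 2 - 1) / q ^ 2 := by rw [hs, div_pow, hk2]
    have hinner : ∀ z : ℝ, ∫⁻ ρ : ℝ, (sec q).indicator (fun p => ENNReal.ofReal p.2) (z, ρ) ≤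
        (Icc (-s) s).indicator (fun z => ENNReal.ofReal ((1 - z ^ 2 / s ^ 2) / 2)) z := by
      intro z
      by_cases hz : z ∈ Icc (-s) s
      · rw [indicator_of_mem hz]
        have hz2 : z ^ 2 ≤ s ^ 2 := sq_le_sq' hz.1 hz.2
        have hs1 : s ^ 2 < 1 := by rw [hs2, div_lt_one (by positivity)]; linarith
        set u := √(1 - z ^ 2) with hu
        have hu2 : u ^ 2 = 1 - z ^ 2 := Real.sq_sqrt (by linarith)
        set l := |z| / k with hl
        have hl2 : l ^ 2 = z ^ 2 / (q ^ 2 - 1) := by rw [hl, div_pow, sq_abs, hk2]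
        have hl0 : 0 ≤ l := by positivity
        have hlu : l ≤ u := by
          apply Real.le_sqrt_of_sq_le
          rw [hl2, div_le_iff₀ hq2]
          rw [hs2, le_div_iff₀ (by positivity)] at hz2
          nlinarith
        have hle : ∀ ρ : ℝ, (sec q).indicator (fun p => ENNReal.ofReal p.2) (z, ρ) ≤
            (Icc l u).indicator (fun ρ => ENNReal.ofReal ρ) ρ := by
          intro ρ
          by_cases hm : (z, ρ) ∈ sec q
          · obtain ⟨h1, h2, h3, h4⟩ := sec_cond hm
            rw [indicator_of_mem hm, indicator_of_mem]
            constructor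
            · apply le_of_sq_le_sq _ h1.le
              rw [hl2, div_le_iff₀ hq2]; linarith
            · apply Real.le_sqrt_of_sq_le; linarith
          · rw [indicator_of_notMem hm]; exact zero_le
        refine (lintegral_mono hle).trans ?_
        rw [lintegral_indicator measurableSet_Icc, lint_of_int hlu continuous_id'
          (fun t ht => hl0.trans ht.1), integral_id]
        apply ENNReal.ofReal_le_ofReal
        rw [hu2, hl2, hs2]
        apply le_of_eq; field_simp; ring
      · rw [indicator_of_notMem hz]
        rw [lintegral_eq_zero_of_ae_eq_zero]
        filter_upwards with ρ
        apply indicator_of_notMem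
        intro hm
        obtain ⟨h1, h2, h3, h4⟩ := sec_cond hm
        apply hz
        apply abs_le.1
        apply abs_le_of_sq_le_sq _ hs0.le
        rw [hs2, le_div_iff₀ (by positivity)]
        nlinarith
    refine (lintegral_mono hinner).trans ?_
    rw [lintegral_indicator measurableSet_Icc, lint_of_int (by linarith) (by fun_prop)]
    · apply ENNReal.ofReal_le_ofReal
      apply le_of_eq
      have : ∀ z : ℝ, (1 - z ^ 2 / s ^ 2) / 2 = 1 / 2 - z ^ 2 * (1 / (2 * s ^ 2)) := fun z => by
        field_simp
      simp_rw [this]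
      rw [intervalIntegral.integral_sub (by simp) (by apply Continuous.intervalIntegrable; fun_prop),
        intervalIntegral.integral_mul_const, integral_pow]
      simp; field_simp; ring
    · intro t ht
      have : t ^ 2 ≤ s ^ 2 := sq_le_sq' ht.1 ht.2
      have : t ^ 2 / s ^ 2 ≤ 1 := by rw [div_le_one (by positivity)]; exact this
      linarith

def coordMap (w : E3) : ℝ × (ℝ × ℝ) := (w 2, (w 0, w 1))

lemma coordMap_mp : MeasurePreserving coordMap := by
  have h1 := EuclideanSpace.volume_preserving_symm_measurableEquiv_toLp (Fin 3)
  have h2 := volume_preserving_piFinSuccAbove (fun _ : Fin 3 => ℝ) 2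
  have h3 := (MeasurePreserving.id (volume : Measure ℝ)).prod (volume_preserving_finTwoArrow ℝ)
  exact (h3.comp h2).comp h1

def Wedge (r ψ' ψ : ℝ) : Set (ℝ × (ℝ × ℝ)) :=
  {p | p.2.1 ^ 2 + p.2.2 ^ 2 + p.1 ^ 2 < 1 ∧ √(p.2.1 ^ 2 + p.2.2 ^ 2 + p.1 ^ 2) ≤ r * p.2.1 ∧
    0 ≤ sin ψ * p.2.1 - cos ψ * p.2.2 ∧ sin ψ' * p.2.1 - cos ψ' * p.2.2 ≤ 0}

lemma meas_Wedge (r ψ' ψ : ℝ) : MeasurableSet (Wedge r ψ' ψ) := by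
  have h1 : MeasurableSet {p : ℝ × (ℝ × ℝ) | p.2.1 ^ 2 + p.2.2 ^ 2 + p.1 ^ 2 < 1} :=
    measurableSet_lt (by fun_prop) (by fun_prop)
  have h2 : MeasurableSet {p : ℝ × (ℝ × ℝ) | √(p.2.1 ^ 2 + p.2.2 ^ 2 + p.1 ^ 2) ≤ r * p.2.1} :=
    measurableSet_le (by fun_prop) (by fun_prop)
  have h3 : MeasurableSet {p : ℝ × (ℝ × ℝ) | 0 ≤ sin ψ * p.2.1 - cos ψ * p.2.2} :=
    measurableSet_le (by fun_prop) (by fun_prop)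
  have h4 : MeasurableSet {p : ℝ × (ℝ × ℝ) | sin ψ' * p.2.1 - cos ψ' * p.2.2 ≤ 0} :=
    measurableSet_le (by fun_prop) (by fun_prop)
  exact h1.inter (h2.inter (h3.inter h4))

def GG (r ψ' ψ : ℝ) : Set (ℝ × (ℝ × ℝ)) :=
  {p | p.2.2 ∈ Icc ψ' ψ ∧ (p.1, p.2.1) ∈ sec (r * cos p.2.2)}

lemma meas_GG (r ψ' ψ : ℝ) : MeasurableSet (GG r ψ' ψ) := by
  have h0 : MeasurableSet {p : ℝ × (ℝ × ℝ) | p.2.2 ∈ Icc ψ' ψ} :=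
    measurableSet_Icc.preimage (by fun_prop)
  have h1 : MeasurableSet {p : ℝ × (ℝ × ℝ) | 0 < p.2.1} :=
    measurableSet_lt (by fun_prop) (by fun_prop)
  have h2 : MeasurableSet {p : ℝ × (ℝ × ℝ) | p.2.1 ^ 2 + p.1 ^ 2 < 1} :=
    measurableSet_lt (by fun_prop) (by fun_prop)
  have h3 : MeasurableSet {p : ℝ × (ℝ × ℝ) | √(p.2.1 ^ 2 + p.1 ^ 2) ≤ r * cos p.2.2 * p.2.1} :=
    measurableSet_le (by fun_prop) (by fun_prop)
  exact h0.inter (h1.inter (h2.inter h3))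

lemma wedge_polar {r ψ' ψ : ℝ} (hr : 0 < r) (h1 : -(π / 2) ≤ ψ') (h2 : ψ' ≤ ψ)
    (h3 : ψ ≤ π / 2) (z : ℝ) (p : ℝ × ℝ) (hp : p ∈ polarCoord.target)
    (hw : (z, polarCoord.symm p) ∈ Wedge r ψ' ψ) : (z, p) ∈ GG r ψ' ψ := by
  obtain ⟨ρ, θ⟩ := p
  simp only [polarCoord_target, mem_prod, mem_Ioi, mem_Ioo] at hp
  obtain ⟨hρ, hθ1, hθ2⟩ := hp
  obtain ⟨w1, w2, w3, w4⟩ := hw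
  simp only [polarCoord_symm_apply] at w1 w2 w3 w4
  have e : (ρ * cos θ) ^ 2 + (ρ * sin θ) ^ 2 + z ^ 2 = ρ ^ 2 + z ^ 2 := by
    have := Real.sin_sq_add_cos_sq θ; linear_combination ρ ^ 2 * this
  rw [e] at w1 w2
  have hcos : 0 < cos θ := by
    have : 0 < √(ρ ^ 2 + z ^ 2) := Real.sqrt_pos.2 (by positivity)
    have : 0 < r * ρ * cos θ := by linarith
    exact (pos_iff_pos_of_mul_pos this).1 (by positivity)
  have hθl : -(π / 2) < θ := by
    by_contra! hc
    have := Real.cos_nonpos_of_pi_div_two_le_of_le (x := -θ) (by linarith) (by linarith)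
    rw [Real.cos_neg] at this; linarith
  have hθu : θ < π / 2 := by
    by_contra! hc
    have := Real.cos_nonpos_of_pi_div_two_le_of_le (x := θ) (by linarith) (by linarith)
    linarith
  refine ⟨⟨?_, ?_⟩, hρ, w1, ?_⟩
  · by_contra! hc
    have := Real.sin_pos_of_pos_of_lt_pi (x := ψ' - θ) (by dsimp only at hc; linarith)
      (by linarith)
    rw [Real.sin_sub] at this
    nlinarith
  · by_contra! hc
    have := Real.sin_pos_of_pos_of_lt_pi (x := θ - ψ) (by dsimp only at hc; linarith)
      (by linarith)
    rw [Real.sin_sub] at this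
    nlinarith
  · dsimp only; linarith

lemma wedge_vol {r ψ' ψ : ℝ} (hr : 0 < r) (h1 : -(π / 2) ≤ ψ') (h2 : ψ' ≤ ψ)
    (h3 : ψ ≤ π / 2) : volume (Wedge r ψ' ψ) ≤
      ∫⁻ t in Icc ψ' ψ, ENNReal.ofReal (2 / 3 * (√((r * cos t) ^ 2 - 1) / (r * cos t))) := by
  have hmW := meas_Wedge r ψ' ψ
  have hmG := meas_GG r ψ' ψ
  set g : ℝ × (ℝ × ℝ) → ℝ≥0∞ := (GG r ψ' ψ).indicator (fun p => ENNReal.ofReal p.2.1) with hg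
  have hgm : Measurable g := Measurable.indicator (by fun_prop) hmG
  calc volume (Wedge r ψ' ψ) = ∫⁻ p, (Wedge r ψ' ψ).indicator 1 p := by
        rw [lintegral_indicator_one hmW]
    _ = ∫⁻ z : ℝ, ∫⁻ p : ℝ × ℝ, (Wedge r ψ' ψ).indicator 1 (z, p) := by
        rw [Measure.volume_eq_prod, lintegral_prod _ (by
          apply Measurable.aemeasurable
          exact measurable_one.indicator hmW)]
    _ = ∫⁻ z : ℝ, ∫⁻ p in polarCoord.target, ENNReal.ofReal p.1 •
          (Wedge r ψ' ψ).indicator 1 (z, polarCoord.symm p) := by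
        congr 1; ext z
        rw [← lintegral_comp_polarCoord_symm (fun p => (Wedge r ψ' ψ).indicator 1 (z, p))]
    _ ≤ ∫⁻ z : ℝ, ∫⁻ p : ℝ × ℝ, g (z, p) := by
        apply lintegral_mono; intro z
        refine (setLIntegral_mono' (g := fun p => g (z, p))
          (polarCoord.open_target.measurableSet) ?_).trans (setLIntegral_le_lintegral _ _)
        intro p hp
        by_cases hw : (z, polarCoord.symm p) ∈ Wedge r ψ' ψ
        · have := wedge_polar hr h1 h2 h3 z p hp hw
          simp only [hg]
          rw [indicator_of_mem hw, indicator_of_mem this]; simp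
        · rw [indicator_of_notMem hw]; simp
    _ = ∫⁻ z : ℝ, ∫⁻ t : ℝ, ∫⁻ ρ : ℝ, g (z, (ρ, t)) := by
        congr 1; ext z
        rw [Measure.volume_eq_prod, lintegral_prod_symm _ (by
          apply Measurable.aemeasurable
          exact hgm.comp (by fun_prop))]
    _ = ∫⁻ t : ℝ, ∫⁻ z : ℝ, ∫⁻ ρ : ℝ, g (z, (ρ, t)) := by
        rw [lintegral_lintegral_swap]
        apply Measurable.aemeasurable
        have : Measurable (fun q : (ℝ × ℝ) × ℝ => g (q.1.1, (q.2, q.1.2))) :=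
          hgm.comp (by fun_prop)
        exact this.lintegral_prod_right'
    _ ≤ ∫⁻ t : ℝ, (Icc ψ' ψ).indicator
          (fun t => ENNReal.ofReal (2 / 3 * (√((r * cos t) ^ 2 - 1) / (r * cos t)))) t := by
        apply lintegral_mono; intro t
        by_cases ht : t ∈ Icc ψ' ψ
        · rw [indicator_of_mem ht]
          refine le_trans (le_of_eq ?_) (sec_area (r * cos t))
          refine lintegral_congr fun z => lintegral_congr fun ρ => ?_
          by_cases hm : (z, ρ) ∈ sec (r * cos t)
          · rw [indicator_of_mem hm]; simp only [hg]
            rw [indicator_of_mem (show (z, (ρ, t)) ∈ GG r ψ' ψ from ⟨ht, hm⟩)]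
          · rw [indicator_of_notMem hm]; simp only [hg]
            rw [indicator_of_notMem (fun h : (z, (ρ, t)) ∈ GG r ψ' ψ => hm h.2)]
        · rw [indicator_of_notMem ht]
          apply le_of_eq
          have : ∀ z ρ : ℝ, g (z, (ρ, t)) = 0 := by
            intro z ρ; simp only [hg]; apply indicator_of_notMem
            intro hm; exact ht hm.1
          simp [this]
    _ = _ := by rw [lintegral_indicator measurableSet_Icc]

/-- Vertex lemma in the form with explicit kappa -/
lemma vertex_V {x v v' : E3} (hx : x ≠ 0) (hv : ‖v‖ = 1) (hv' : ‖v'‖ = 1)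
    (hle : arcsin (⟪x, v'⟫ / ‖x‖) ≤ arcsin (⟪x, v⟫ / ‖x‖)) :
    ENNReal.ofReal (TT x v - TT x v') ≤
      ∫⁻ t in Icc (arcsin (⟪x, v'⟫ / ‖x‖)) (arcsin (⟪x, v⟫ / ‖x‖)),
        ENNReal.ofReal (2 / 3 * (√((‖x‖ * cos t) ^ 2 - 1) / (‖x‖ * cos t))) := by
  obtain ⟨Φ, e1, e2⟩ := exists_frame hx hv
  obtain ⟨Φ', e1', e2'⟩ := exists_frame hx hv'
  set r := ‖x‖ with hr
  set ψ := arcsin (⟪x, v⟫ / r) with hψ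
  set ψ' := arcsin (⟪x, v'⟫ / r) with hψ'
  have hr0 : 0 < r := norm_pos_iff.2 hx
  refine le_trans ?_ (wedge_vol hr0 (neg_pi_div_two_le_arcsin _) hle (arcsin_le_pi_div_two _))
  rw [← coordMap_mp.measure_preimage (meas_Wedge _ _ _).nullMeasurableSet]
  rw [← TT_isometry Φ x v, ← TT_isometry Φ' x v', e1, e1', e2, e2']
  set X : E3 := !₂[r, 0, 0] with hX
  set V : E3 := !₂[sin ψ, -cos ψ, 0] with hV
  set V' : E3 := !₂[sin ψ', -cos ψ', 0] with hV'
  set W := coordMap ⁻¹' Wedge r ψ' ψ with hW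
  have hmem : ∀ w, w ∈ Cap X → 0 ≤ ⟪V, w⟫ → ⟪V', w⟫ ≤ 0 → w ∈ W := by
    rintro w ⟨a, b⟩ c d
    have hn := norm_sq3 w
    have hn' : ‖w‖ = √(w 0 ^ 2 + w 1 ^ 2 + w 2 ^ 2) := by
      rw [← hn, Real.sqrt_sq (norm_nonneg _)]
    rw [inner3] at b c d
    simp [hX, hV, hV'] at b c d
    refine ⟨?_, ?_, ?_, ?_⟩
    · simp only [coordMap]; rw [← hn]; nlinarith [norm_nonneg w]
    · simp only [coordMap]; rw [← hn']; exact b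
    · simp only [coordMap]; linarith
    · simp only [coordMap]; linarith
  have hWfin : volume W ≠ ∞ := by
    have : W ⊆ Metric.ball 0 1 := by
      intro w hw
      have := hw.1
      simp only [coordMap] at this
      rw [← norm_sq3] at this
      have : ‖w‖ < 1 := by nlinarith [norm_nonneg w]
      simpa using this
    exact ((measure_mono this).trans_lt measure_ball_lt_top).ne
  have hfin : ∀ S : Set E3, S ⊆ Cap X → volume S ≠ ∞ := fun S h => fin_of_sub_Cap h
  have i1 : volume.real (Cap X ∩ Pos V) ≤ volume.real (Cap X ∩ Pos V') + volume.real W := by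
    refine (measureReal_mono ?_ ?_).trans (measureReal_union_le _ _)
    · rintro w ⟨a, b⟩
      rcases lt_or_ge 0 ⟪V', w⟫ with h | h
      · exact Or.inl ⟨a, h⟩
      · exact Or.inr (hmem w a (le_of_lt b) h)
    · exact (measure_union_lt_top (hfin _ inter_subset_left).lt_top hWfin.lt_top).ne
  have i2 : volume.real (Cap X ∩ Neg' V') ≤ volume.real (Cap X ∩ Neg' V) + volume.real W := by
    refine (measureReal_mono ?_ ?_).trans (measureReal_union_le _ _)
    · rintro w ⟨a, b⟩
      rcases lt_or_ge ⟪V, w⟫ 0 with h | h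
      · exact Or.inl ⟨a, h⟩
      · exact Or.inr (hmem w a h (le_of_lt b))
    · exact (measure_union_lt_top (hfin _ inter_subset_left).lt_top hWfin.lt_top).ne
  rw [← ofReal_measureReal hWfin]
  apply ENNReal.ofReal_le_ofReal
  simp only [TT]
  linarith


def kap (p : ℝ) : ℝ := 2 * √(p ^ 2 - 1) / max p 1

lemma kap_cont : Continuous kap := by
  unfold kap
  apply Continuous.div (by fun_prop) (by fun_prop)
  intro x; have := le_max_right x 1; positivity

lemma kap_nonneg (p : ℝ) : 0 ≤ kap p := by unfold kap; positivity

lemma kap_eq {p : ℝ} (hp : 0 ≤ p) : 2 / 3 * (√(p ^ 2 - 1) / p) = 1 / 3 * kap p := by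
  unfold kap
  rcases le_total p 1 with h | h
  · rw [Real.sqrt_eq_zero_of_nonpos (by nlinarith)]; simp
  · rw [max_eq_left h]; ring

lemma kap_le {p : ℝ} (hp : 0 ≤ p) : kap p ≤ p := by
  unfold kap
  rcases le_total p 1 with h | h
  · rw [Real.sqrt_eq_zero_of_nonpos (by nlinarith)]; simpa using hp
  · rw [max_eq_left h, div_le_iff₀ (by linarith)]
    have := Real.sq_sqrt (show 0 ≤ p ^ 2 - 1 by nlinarith)
    nlinarith [sq_nonneg (√(p ^ 2 - 1) - 1)]

lemma kap_le' {p : ℝ} (hp : 0 ≤ p) (hp1 : p ≤ 1.1) : kap p ≤ 0.92 * p := by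
  unfold kap
  rcases le_total p 1 with h | h
  · rw [Real.sqrt_eq_zero_of_nonpos (by nlinarith)]; simp; positivity
  · rw [max_eq_left h, div_le_iff₀ (by linarith)]
    have : √(p ^ 2 - 1) ≤ 0.46 := by
      rw [Real.sqrt_le_left (by norm_num)]; nlinarith
    nlinarith

lemma vertex_V' {x v v' : E3} (hx : x ≠ 0) (hv : ‖v‖ = 1) (hv' : ‖v'‖ = 1)
    (hle : arcsin (⟪x, v'⟫ / ‖x‖) ≤ arcsin (⟪x, v⟫ / ‖x‖)) :
    TT x v - TT x v' ≤ 1 / 3 * ∫ t in (arcsin (⟪x, v'⟫ / ‖x‖))..(arcsin (⟪x, v⟫ / ‖x‖)),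
        kap (‖x‖ * cos t) := by
  have h := vertex_V hx hv hv' hle
  have e : ∫⁻ t in Icc (arcsin (⟪x, v'⟫ / ‖x‖)) (arcsin (⟪x, v⟫ / ‖x‖)),
        ENNReal.ofReal (2 / 3 * (√((‖x‖ * cos t) ^ 2 - 1) / (‖x‖ * cos t))) =
      ∫⁻ t in Icc (arcsin (⟪x, v'⟫ / ‖x‖)) (arcsin (⟪x, v⟫ / ‖x‖)),
        ENNReal.ofReal (1 / 3 * kap (‖x‖ * cos t)) := by
    apply setLIntegral_congr_fun measurableSet_Icc
    intro t ht
    dsimp only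
    rw [kap_eq]
    apply mul_nonneg (norm_nonneg _)
    apply Real.cos_nonneg_of_mem_Icc
    exact ⟨(neg_pi_div_two_le_arcsin _).trans ht.1, ht.2.trans (arcsin_le_pi_div_two _)⟩
  rw [e, lint_of_int hle (by have := kap_cont; fun_prop) (fun t _ => by
    have := kap_nonneg (‖x‖ * cos t); positivity), intervalIntegral.integral_const_mul] at h
  refine (ENNReal.ofReal_le_ofReal_iff ?_).1 h
  have := intervalIntegral.integral_nonneg (μ := volume) hle (fun t _ => kap_nonneg (‖x‖ * cos t))
  positivity

lemma exists_switch {P : ℕ → Prop} {a b : ℕ} (hab : a ≤ b) (ha : ¬ P a) (hb : P b) :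
    ∃ j, a ≤ j ∧ j < b ∧ ¬ P j ∧ P (j + 1) := by
  induction b, hab using Nat.le_induction with
  | base => exact absurd hb ha
  | succ b hab ih =>
    by_cases h : P b
    · obtain ⟨j, h1, h2, h3⟩ := ih h; exact ⟨j, h1, by omega, h3⟩
    · exact ⟨b, hab, by omega, h, hb⟩

lemma not_mem_cap {o w : E3} (ho : ‖o‖ < 1) (hw : w ≠ 0) : w ∉ Cap o := by
  rintro ⟨_, h⟩
  have := real_inner_le_norm o w
  have : 0 < ‖w‖ := norm_pos_iff.2 hw
  nlinarith

lemma mem_cap {q w : E3} (hw : w ≠ 0) (hw1 : ‖w‖ < 1) (h : 1 ≤ ⟪q, ‖w‖⁻¹ • w⟫) : w ∈ Cap q := by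
  refine ⟨hw1, ?_⟩
  have h0 : 0 < ‖w‖ := norm_pos_iff.2 hw
  rw [inner_smul_right, inv_mul_eq_div, le_div_iff₀ h0] at h
  linarith

lemma vol_ball_real : volume.real (Metric.ball (0 : E3) 1) = 4 / 3 * π := by
  rw [measureReal_def, EuclideanSpace.volume_ball_fin_three]
  simp; rw [ENNReal.toReal_ofReal (by positivity)]; ring

lemma cover_bound {n : ℕ} {A : ℕ → Set E3} (hA : ∀ i, volume (A i) ≠ ∞)
    (h : ∀ w : E3, w ≠ 0 → ‖w‖ < 1 → ∃ i < n, w ∈ A i) :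
    4 / 3 * π ≤ ∑ i ∈ Finset.range n, volume.real (A i) := by
  rw [← vol_ball_real]
  have e : volume.real (Metric.ball (0 : E3) 1) = volume.real (Metric.ball (0 : E3) 1 \ {0}) := by
    rw [measureReal_def, measureReal_def, measure_sdiff_null (by simp)]
  rw [e]
  refine (measureReal_mono ?_ ?_).trans (measureReal_biUnion_finset_le (Finset.range n) A)
  · rintro w ⟨hw, hw0⟩
    obtain ⟨i, hi, hm⟩ := h w hw0 (by simpa using hw)
    simp only [mem_iUnion, Finset.mem_range]
    exact ⟨i, hi, hm⟩
  · exact (measure_biUnion_lt_top (Finset.finite_toSet _) (fun i _ => (hA i).lt_top)).ne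

/-- unit direction of the i-th edge -/
def vdir (q : ℕ → E3) (i : ℕ) : E3 := ‖q (i + 1) - q i‖⁻¹ • (q (i + 1) - q i)

lemma vdir_norm {q : ℕ → E3} {i : ℕ} (h : q i ≠ q (i + 1)) : ‖vdir q i‖ = 1 := by
  have : ‖q (i + 1) - q i‖ ≠ 0 := by rw [norm_ne_zero_iff, sub_ne_zero]; exact h.symm
  rw [vdir, norm_smul, norm_inv, norm_norm, inv_mul_cancel₀ this]

lemma vdir_step {q : ℕ → E3} {i : ℕ} (h : q i ≠ q (i + 1)) :
    q (i + 1) = q i + ‖q (i + 1) - q i‖ • vdir q i := by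
  have : ‖q (i + 1) - q i‖ ≠ 0 := by rw [norm_ne_zero_iff, sub_ne_zero]; exact h.symm
  rw [vdir, smul_smul, mul_inv_cancel₀ this, one_smul]; abel

lemma tele (n : ℕ) (f g : ℕ → ℝ) : ∑ i ∈ Finset.range (n + 1), (f i - g i) =
    ∑ i ∈ Finset.range n, (f i - g (i + 1)) + (f n - g 0) := by
  induction n with
  | zero => simp
  | succ n ih => rw [Finset.sum_range_succ, ih, Finset.sum_range_succ]; ring

lemma r_sin {x v : E3} (hv : ‖v‖ = 1) : ‖x‖ * sin (arcsin (⟪x, v⟫ / ‖x‖)) = ⟪x, v⟫ := by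
  have h := abs_le.1 (abs_real_inner_le_norm x v)
  rw [hv, mul_one] at h
  rcases (norm_nonneg x).eq_or_lt with h0 | h0
  · have : x = 0 := by rw [← norm_eq_zero, h0]
    simp [this]
  · rw [Real.sin_arcsin]
    · field_simp
    · rw [le_div_iff₀ h0]; linarith
    · rw [div_le_iff₀ h0]; linarith

lemma r_cos {x v : E3} (hv : ‖v‖ = 1) : ‖x‖ * cos (arcsin (⟪x, v⟫ / ‖x‖)) =
    √(‖x‖ ^ 2 - ⟪x, v⟫ ^ 2) := by
  have h0 : 0 ≤ cos (arcsin (⟪x, v⟫ / ‖x‖)) := Real.cos_arcsin_nonneg _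
  have h1 := r_sin (x := x) hv
  have h2 : ‖x‖ ^ 2 - ⟪x, v⟫ ^ 2 = (‖x‖ * cos (arcsin (⟪x, v⟫ / ‖x‖))) ^ 2 := by
    have h3 := Real.sin_sq_add_cos_sq (arcsin (⟪x, v⟫ / ‖x‖))
    generalize arcsin (⟪x, v⟫ / ‖x‖) = t at *
    rw [← h1]
    linear_combination (-‖x‖ ^ 2) * h3
  rw [h2]
  exact (Real.sqrt_sq (by positivity)).symm


/-- A critical polygon through the point `q 0` of the open ball. -/
structure Crit (q : ℕ → E3) (n : ℕ) : Prop where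
  closed : q (n + 1) = q 0
  base : ‖q 0‖ < 1
  ne : ∀ i ≤ n, q i ≠ q (i + 1)
  one_le : ∀ i < n, 1 ≤ ‖q (i + 1)‖
  le : ∀ i < n, ‖q (i + 1)‖ ≤ 20
  rad : ∀ i < n, ⟪q (i + 1), vdir q (i + 1)⟫ ≤ ⟪q (i + 1), vdir q i⟫
  sees : ∀ u : E3, ‖u‖ = 1 → ∃ i < n, 1 ≤ ⟪q (i + 1), u⟫

def al (q : ℕ → E3) (i : ℕ) : ℝ := arcsin (⟪q (i + 1), vdir q (i + 1)⟫ / ‖q (i + 1)‖)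
def be (q : ℕ → E3) (i : ℕ) : ℝ := arcsin (⟪q (i + 1), vdir q i⟫ / ‖q (i + 1)‖)

lemma Crit.al_le {q : ℕ → E3} {n : ℕ} (h : Crit q n) {i : ℕ} (hi : i < n) : al q i ≤ be q i := by
  apply Real.monotone_arcsin
  have := h.rad i hi
  gcongr

lemma Crit.J {q : ℕ → E3} {n : ℕ} (h : Crit q n) :
    4 * π ≤ ∑ i ∈ Finset.range n, ∫ t in (al q i)..(be q i), kap (‖q (i + 1)‖ * cos t) := by
  have hU : 4 / 3 * π ≤ ∑ i ∈ Finset.range (n + 1),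
      volume.real (Cap (q i) \ Cap (q (i + 1))) := by
    apply cover_bound (fun i => fin_of_sub_Cap sdiff_subset)
    intro w hw hw1
    obtain ⟨i, hi, h1⟩ := h.sees (‖w‖⁻¹ • w) (by
      rw [norm_smul, norm_inv, norm_norm, inv_mul_cancel₀ (norm_ne_zero_iff.2 hw)])
    obtain ⟨j, _, h2, h3, h4⟩ := exists_switch (P := fun j => w ∉ Cap (q j))
      (a := i + 1) (b := n + 1) (by omega) (not_not.2 (mem_cap hw hw1 h1))
      (by rw [h.closed]; exact not_mem_cap h.base hw)
    exact ⟨j, h2, not_not.1 h3, h4⟩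
  have hD : 4 / 3 * π ≤ ∑ i ∈ Finset.range (n + 1),
      volume.real (Cap (q (i + 1)) \ Cap (q i)) := by
    apply cover_bound (fun i => fin_of_sub_Cap sdiff_subset)
    intro w hw hw1
    obtain ⟨i, hi, h1⟩ := h.sees (‖w‖⁻¹ • w) (by
      rw [norm_smul, norm_inv, norm_norm, inv_mul_cancel₀ (norm_ne_zero_iff.2 hw)])
    obtain ⟨j, _, h2, h3, h4⟩ := exists_switch (P := fun j => w ∈ Cap (q j))
      (a := 0) (b := i + 1) (by omega) (not_mem_cap h.base hw) (mem_cap hw hw1 h1)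
    exact ⟨j, by omega, h4, h3⟩
  have hK : ∀ i ∈ Finset.range (n + 1), volume.real (Cap (q i) \ Cap (q (i + 1))) +
      volume.real (Cap (q (i + 1)) \ Cap (q i)) ≤
      2 * (TT (q (i + 1)) (vdir q i) - TT (q i) (vdir q i)) := by
    intro i hi
    have hne := h.ne i (by simpa [Nat.lt_succ_iff] using hi)
    have := key_K (q i) (vdir q i) (norm_nonneg (q (i + 1) - q i))
    rw [← vdir_step hne] at this
    rwa [measureReal_symmDiff_eq (μ := volume) (meas_Cap (q i)) (meas_Cap (q (i + 1)))
      (fin_of_sub_Cap (x := q i) subset_rfl) (fin_of_sub_Cap (x := q (i + 1)) subset_rfl)] at this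
  have hs := Finset.sum_le_sum hK
  rw [Finset.sum_add_distrib, ← Finset.mul_sum, tele n (fun i => TT (q (i + 1)) (vdir q i))
    (fun i => TT (q i) (vdir q i))] at hs
  simp only [h.closed, TT_small h.base] at hs
  have hV : ∑ i ∈ Finset.range n, (TT (q (i + 1)) (vdir q i) - TT (q (i + 1)) (vdir q (i + 1))) ≤
      ∑ i ∈ Finset.range n, 1 / 3 * ∫ t in (al q i)..(be q i), kap (‖q (i + 1)‖ * cos t) := by
    apply Finset.sum_le_sum
    intro i hi
    have hi := Finset.mem_range.1 hi
    apply vertex_V' _ (vdir_norm (h.ne i hi.le)) (vdir_norm (h.ne (i + 1) hi)) (h.al_le hi)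
    have := h.one_le i hi
    rw [← norm_pos_iff]; linarith
  rw [← Finset.mul_sum] at hV
  linarith

lemma Crit.I {q : ℕ → E3} {n : ℕ} (h : Crit q n) :
    ∑ i ∈ Finset.range n, ∫ t in (al q i)..(be q i), ‖q (i + 1)‖ * cos t ≤
    ∑ i ∈ Finset.range (n + 1), ‖q (i + 1) - q i‖ + ‖vdir q n - vdir q 0‖ := by
  have e1 : ∑ i ∈ Finset.range (n + 1), ‖q (i + 1) - q i‖ = ∑ i ∈ Finset.range (n + 1),
      (⟪q (i + 1), vdir q i⟫ - ⟪q i, vdir q i⟫) := by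
    apply Finset.sum_congr rfl
    intro i hi
    have hne := h.ne i (by simpa [Nat.lt_succ_iff] using hi)
    have h0 : ‖q (i + 1) - q i‖ ≠ 0 := by rw [norm_ne_zero_iff, sub_ne_zero]; exact hne.symm
    rw [← inner_sub_left, vdir, inner_smul_right, real_inner_self_eq_norm_sq]
    field_simp
  have e2 : ∑ i ∈ Finset.range n, ∫ t in (al q i)..(be q i), ‖q (i + 1)‖ * cos t =
      ∑ i ∈ Finset.range n, (⟪q (i + 1), vdir q i⟫ - ⟪q (i + 1), vdir q (i + 1)⟫) := by
    apply Finset.sum_congr rfl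
    intro i hi
    have hi := Finset.mem_range.1 hi
    rw [intervalIntegral.integral_const_mul, integral_cos, mul_sub, al, be,
      r_sin (vdir_norm (h.ne i hi.le)), r_sin (vdir_norm (h.ne (i + 1) hi))]
  rw [e1, e2, tele n (fun i => ⟪q (i + 1), vdir q i⟫) (fun i => ⟪q i, vdir q i⟫)]
  rw [h.closed, ← inner_sub_right]
  have h1 := abs_le.1 (abs_real_inner_le_norm (q 0) (vdir q n - vdir q 0))
  have h2 := h.base
  have h3 := norm_nonneg (vdir q n - vdir q 0)
  nlinarith [norm_nonneg (q 0)]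

def kk (p : ℝ) : ℝ := p - kap p

lemma kk_cont : Continuous kk := continuous_id.sub kap_cont

lemma kk_nonneg {p : ℝ} (hp : 0 ≤ p) : 0 ≤ kk p := sub_nonneg.2 (kap_le hp)

lemma kk_move {r a b : ℝ} (hr0 : 0 ≤ r) (hr : r ≤ 20) (hab : a ≤ b)
    (ha : -(π / 2) ≤ a) (hb : b ≤ π / 2) :
    ∫ p in (r * cos b)..(r * cos a), kk p ≤ 20 * ∫ t in a..b, kk (r * cos t) := by
  have := kk_cont
  have e : ∫ x in b..a, (kk ∘ (fun t => r * cos t)) x * (r * (-sin x)) =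
      ∫ u in (r * cos b)..(r * cos a), kk u := by
    apply intervalIntegral.integral_comp_mul_deriv (f := fun t => r * cos t)
      (f' := fun t => r * (-sin t)) (g := kk)
    · intro x _; exact (Real.hasDerivAt_cos x).const_mul r
    · fun_prop
    · fun_prop
  rw [← e, intervalIntegral.integral_symm, ← intervalIntegral.integral_neg,
    ← intervalIntegral.integral_const_mul]
  apply intervalIntegral.integral_mono_on hab
  · apply Continuous.intervalIntegrable; fun_prop
  · apply Continuous.intervalIntegrable; fun_prop
  · intro t ht
    have hc : 0 ≤ cos t := Real.cos_nonneg_of_mem_Icc ⟨ha.trans ht.1, ht.2.trans hb⟩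
    have hk := kk_nonneg (mul_nonneg hr0 hc)
    have hs := Real.sin_le_one t
    have : r * sin t ≤ 20 := by nlinarith
    simp only [Function.comp]
    nlinarith

lemma kk_jump : 0.008 ≤ ∫ p in (1:ℝ)..1.1, kk p := by
  have h : ∫ p in (1:ℝ)..1.1, (0.08 : ℝ) ≤ ∫ p in (1:ℝ)..1.1, kk p := by
    apply intervalIntegral.integral_mono_on (by norm_num) (by simp)
      (kk_cont.intervalIntegrable _ _)
    intro p hp
    have h1 := hp.1
    have := kap_le' (by linarith) hp.2
    unfold kk; linarith
  rw [intervalIntegral.integral_const, smul_eq_mul] at h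
  norm_num at h ⊢
  linarith

lemma kk_ii (a b : ℝ) : IntervalIntegrable kk volume a b := kk_cont.intervalIntegrable _ _

/-- distance from the origin to the i-th edge line -/
def PP (q : ℕ → E3) (i : ℕ) : ℝ := √(‖q i‖ ^ 2 - ⟪q i, vdir q i⟫ ^ 2)

lemma Crit.cos_be {q : ℕ → E3} {n : ℕ} (h : Crit q n) {i : ℕ} (hi : i < n) :
    ‖q (i + 1)‖ * cos (be q i) = PP q i := by
  have hv := vdir_norm (h.ne i hi.le)
  rw [be, r_cos hv, PP]
  congr 1
  rw [vdir_step (h.ne i hi.le)]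
  generalize ‖q (i + 1) - q i‖ = l
  rw [norm_add_sq_real, inner_add_left, real_inner_smul_left, inner_smul_right,
    real_inner_self_eq_norm_sq, norm_smul, hv, Real.norm_eq_abs, mul_one, sq_abs]
  ring

lemma Crit.cos_al {q : ℕ → E3} {n : ℕ} (h : Crit q n) {i : ℕ} (hi : i < n) :
    ‖q (i + 1)‖ * cos (al q i) = PP q (i + 1) := by
  rw [al, r_cos (vdir_norm (h.ne (i + 1) hi)), PP]

theorem Crit.gap {q : ℕ → E3} {n : ℕ} (h : Crit q n) :
    4 * π + 0.0004 ≤ ∑ i ∈ Finset.range (n + 1), ‖q (i + 1) - q i‖ + ‖vdir q n - vdir q 0‖ := by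
  by_contra! hc
  have hJ := h.J
  have hI := h.I
  have hkc := kk_cont
  have hkapc := kap_cont
  set g : ℕ → ℝ := fun i => ∫ t in (al q i)..(be q i), kk (‖q (i + 1)‖ * cos t) with hg
  have hcos : ∀ i < n, ∀ t ∈ Icc (al q i) (be q i), 0 ≤ ‖q (i + 1)‖ * cos t := by
    intro i hi t ht
    apply mul_nonneg (norm_nonneg _)
    apply Real.cos_nonneg_of_mem_Icc
    exact ⟨(neg_pi_div_two_le_arcsin _).trans ht.1, ht.2.trans (arcsin_le_pi_div_two _)⟩
  have hg0 : ∀ i < n, 0 ≤ g i := fun i hi =>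
    intervalIntegral.integral_nonneg (h.al_le hi) fun t ht => kk_nonneg (hcos i hi t ht)
  have hG : ∑ i ∈ Finset.range n, g i < 0.0004 := by
    have : ∑ i ∈ Finset.range n, g i =
        (∑ i ∈ Finset.range n, ∫ t in (al q i)..(be q i), ‖q (i + 1)‖ * cos t) -
        ∑ i ∈ Finset.range n, ∫ t in (al q i)..(be q i), kap (‖q (i + 1)‖ * cos t) := by
      rw [← Finset.sum_sub_distrib]
      apply Finset.sum_congr rfl
      intro i _
      rw [hg, ← intervalIntegral.integral_sub]
      · rfl
      · apply Continuous.intervalIntegrable; fun_prop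
      · apply Continuous.intervalIntegrable; fun_prop
    rw [this]; linarith
  have hstep : ∀ i < n, ∀ t ∈ Icc (al q i) (be q i),
      ∫ p in (PP q i)..(‖q (i + 1)‖ * cos t), kk p ≤ 20 * g i := by
    intro i hi t ht
    have h1 := kk_move (norm_nonneg (q (i + 1))) (h.le i hi) ht.2
      ((neg_pi_div_two_le_arcsin _).trans ht.1) (arcsin_le_pi_div_two _)
    rw [h.cos_be hi] at h1
    have h2 : ∫ s in t..(be q i), kk (‖q (i + 1)‖ * cos s) ≤ g i := by
      have h3 : (∫ s in (al q i)..t, kk (‖q (i + 1)‖ * cos s)) +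
          ∫ s in t..(be q i), kk (‖q (i + 1)‖ * cos s) = g i :=
        intervalIntegral.integral_add_adjacent_intervals
          (by apply Continuous.intervalIntegrable; fun_prop)
          (by apply Continuous.intervalIntegrable; fun_prop)
      have h4 : 0 ≤ ∫ s in (al q i)..t, kk (‖q (i + 1)‖ * cos s) :=
        intervalIntegral.integral_nonneg ht.1 fun s hs =>
          kk_nonneg (hcos i hi s ⟨hs.1, hs.2.trans ht.2⟩)
      linarith
    linarith
  have hP : ∀ i ≤ n, ∫ p in (PP q 0)..(PP q i), kk p ≤ 20 * ∑ j ∈ Finset.range i, g j := by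
    intro i
    induction i with
    | zero => simp
    | succ i ih =>
      intro hi
      have h1 := ih (by omega)
      have h2 := hstep i (by omega) (al q i) ⟨le_rfl, h.al_le (by omega)⟩
      rw [h.cos_al (by omega)] at h2
      rw [← intervalIntegral.integral_add_adjacent_intervals (kk_ii _ (PP q i)) (kk_ii _ _),
        Finset.sum_range_succ]
      linarith
  have hP0 : PP q 0 ≤ 1 := by
    have h1 := h.base
    rw [PP, Real.sqrt_le_left (by norm_num)]
    nlinarith [norm_nonneg (q 0), sq_nonneg ⟪q 0, vdir q 0⟫]
  have hP00 : 0 ≤ PP q 0 := Real.sqrt_nonneg _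
  have hsmall : ∀ i < n, ∀ t ∈ Icc (al q i) (be q i), ‖q (i + 1)‖ * cos t ≤ 1.1 := by
    intro i hi t ht
    by_contra! hbig
    have h1 := hP i hi.le
    have h2 := hstep i hi t ht
    have h3 : ∑ j ∈ Finset.range i, g j + g i ≤ ∑ j ∈ Finset.range n, g j := by
      rw [← Finset.sum_range_succ]
      apply Finset.sum_le_sum_of_subset_of_nonneg
      · intro j hj; simp at hj ⊢; omega
      · intro j hj _; exact hg0 j (Finset.mem_range.1 hj)
    have h4 : (∫ p in (PP q 0)..(PP q i), kk p) + ∫ p in (PP q i)..(‖q (i + 1)‖ * cos t), kk p =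
        (∫ p in (PP q 0)..1, kk p) + ((∫ p in (1:ℝ)..1.1, kk p) +
          ∫ p in (1.1:ℝ)..(‖q (i + 1)‖ * cos t), kk p) := by
      rw [intervalIntegral.integral_add_adjacent_intervals (kk_ii _ _) (kk_ii _ _),
        intervalIntegral.integral_add_adjacent_intervals (kk_ii _ _) (kk_ii _ _),
        intervalIntegral.integral_add_adjacent_intervals (kk_ii _ _) (kk_ii _ _)]
    have h5 : 0 ≤ ∫ p in (PP q 0)..1, kk p :=
      intervalIntegral.integral_nonneg hP0 fun p hp => kk_nonneg (hP00.trans hp.1)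
    have h6 : 0 ≤ ∫ p in (1.1:ℝ)..(‖q (i + 1)‖ * cos t), kk p :=
      intervalIntegral.integral_nonneg hbig.le fun p hp => kk_nonneg (by linarith [hp.1])
    have h7 := kk_jump
    linarith
  have hfin : ∑ i ∈ Finset.range n, ∫ t in (al q i)..(be q i), kap (‖q (i + 1)‖ * cos t) ≤
      ∑ i ∈ Finset.range n, 0.92 * ∫ t in (al q i)..(be q i), ‖q (i + 1)‖ * cos t := by
    apply Finset.sum_le_sum
    intro i hi
    have hi := Finset.mem_range.1 hi
    rw [← intervalIntegral.integral_const_mul]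
    apply intervalIntegral.integral_mono_on (h.al_le hi)
    · apply Continuous.intervalIntegrable; fun_prop
    · apply Continuous.intervalIntegrable; fun_prop
    · intro t ht
      exact kap_le' (hcos i hi t ht) (hsmall i hi t ht)
  rw [← Finset.mul_sum] at hfin
  have := Real.pi_gt_three
  linarith


/-- admissible closed polygon based at `o` -/
structure Adm (o : E3) (n : ℕ) (q : ℕ → E3) : Prop where
  zero : q 0 = o
  last : q (n + 1) = o
  sees : ∀ u : E3, ‖u‖ = 1 → ∃ i < n, 1 ≤ ⟪q (i + 1), u⟫

def plen (q : ℕ → E3) (n : ℕ) : ℝ := ∑ i ∈ Finset.range (n + 1), ‖q (i + 1) - q i‖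

lemma Adm.bound {o : E3} {n : ℕ} {q : ℕ → E3} (h : Adm o n q) {i : ℕ} (hi : i ≤ n + 1) :
    ‖q i‖ ≤ ‖o‖ + plen q n := by
  have h1 := dist_le_range_sum_dist q i
  have h2 : ∑ j ∈ Finset.range i, dist (q j) (q (j + 1)) ≤ plen q n := by
    unfold plen
    simp_rw [dist_comm (q _) (q (_ + 1)), dist_eq_norm]
    apply Finset.sum_le_sum_of_subset_of_nonneg
    · intro j hj; simp at hj ⊢; omega
    · intros; positivity
  rw [dist_comm, dist_eq_norm, h.zero] at h1
  have h3 := norm_add_le (q i - o) o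
  rw [sub_add_cancel] at h3
  linarith

lemma Adm.exists_min {o : E3} {n : ℕ} {q₀ : ℕ → E3} (h : Adm o n q₀) :
    ∃ q, Adm o n q ∧ ∀ q', Adm o n q' → plen q n ≤ plen q' n := by
  set R := ‖o‖ + plen q₀ n with hR
  have hpl : 0 ≤ plen q₀ n := Finset.sum_nonneg fun _ _ => norm_nonneg _
  let K : Set (ℕ → E3) := Set.pi univ (fun _ => Metric.closedBall 0 R)
  have hK : IsCompact K := isCompact_univ_pi fun _ => isCompact_closedBall _ _
  let A : Set (ℕ → E3) := {q | Adm o n q}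
  have hA : IsClosed A := by
    have : A = {q | q 0 = o} ∩ {q | q (n + 1) = o} ∩
        ⋂ u ∈ {u : E3 | ‖u‖ = 1}, ⋃ i ∈ Finset.range n, {q | 1 ≤ ⟪q (i + 1), u⟫} := by
      ext q
      simp only [A, mem_inter_iff, mem_iInter, mem_iUnion, Finset.mem_range, mem_ofPred_eq]
      constructor
      · intro h
        refine ⟨⟨h.zero, h.last⟩, fun u hu => ?_⟩
        obtain ⟨i, hi, h1⟩ := h.sees u hu
        exact ⟨i, hi, h1⟩
      · rintro ⟨⟨h1, h2⟩, h3⟩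
        refine ⟨h1, h2, fun u hu => ?_⟩
        obtain ⟨i, hi, h1⟩ := h3 u hu
        exact ⟨i, hi, h1⟩
    rw [this]
    refine ((isClosed_eq (by fun_prop) (by fun_prop)).inter
      (isClosed_eq (by fun_prop) (by fun_prop))).inter ?_
    refine isClosed_biInter fun u _ => ?_
    apply Set.Finite.isClosed_biUnion (Finset.finite_toSet _)
    intro i _
    exact isClosed_le (by fun_prop) (by fun_prop)
  have hcont : Continuous (fun q : ℕ → E3 => plen q n) := by unfold plen; fun_prop
  let tr : (ℕ → E3) → ℕ → E3 := fun q i => if i ≤ n then q i else o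
  have htr : ∀ q, Adm o n q → Adm o n (tr q) ∧ plen (tr q) n = plen q n := by
    intro q hq
    have e : ∀ i ≤ n + 1, tr q i = q i := by
      intro i hi
      by_cases h : i ≤ n
      · simp [tr, h]
      · have : i = n + 1 := by omega
        subst this; simp [tr, hq.last]
    refine ⟨⟨by rw [e 0 (by omega), hq.zero], by rw [e _ le_rfl, hq.last], fun u hu => ?_⟩, ?_⟩
    · obtain ⟨i, hi, h1⟩ := hq.sees u hu
      exact ⟨i, hi, by rwa [e _ (by omega)]⟩
    · unfold plen
      apply Finset.sum_congr rfl
      intro i hi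
      have := Finset.mem_range.1 hi
      rw [e _ (by omega), e _ (by omega)]
  have htrK : ∀ q, Adm o n q → plen q n ≤ plen q₀ n → tr q ∈ K := by
    intro q hq hl i _
    rw [mem_closedBall_zero_iff]
    by_cases hi : i ≤ n
    · simp only [tr, hi, if_true]
      have := hq.bound (i := i) (by omega)
      linarith
    · simp only [tr, hi, if_false]
      linarith
  obtain ⟨q, ⟨_, hqA⟩, hq⟩ := (hK.inter_right hA).exists_isMinOn
    ⟨tr q₀, htrK q₀ h le_rfl, (htr q₀ h).1⟩ hcont.continuousOn
  refine ⟨q, hqA, fun q' hq' => ?_⟩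
  have h0 : plen q n ≤ plen q₀ n := by
    rw [← (htr q₀ h).2]
    exact hq ⟨htrK q₀ h le_rfl, (htr q₀ h).1⟩
  rcases le_total (plen q' n) (plen q₀ n) with hl | hl
  · rw [← (htr q' hq').2]
    exact hq ⟨htrK q' hq' hl, (htr q' hq').1⟩
  · linarith

lemma remove_len (q : ℕ → E3) (k : ℕ) {m : ℕ} (hm : k + 1 ≤ m) :
    ∑ i ∈ Finset.range m, ‖(if i + 1 ≤ k then q (i + 1) else q (i + 1 + 1)) -
      (if i ≤ k then q i else q (i + 1))‖ ≤ ∑ i ∈ Finset.range (m + 1), ‖q (i + 1) - q i‖ := by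
  induction m, hm using Nat.le_induction with
  | base =>
    rw [Finset.sum_range_succ, Finset.sum_range_succ _ (k + 1), Finset.sum_range_succ _ k,
      add_assoc (∑ i ∈ Finset.range k, ‖q (i + 1) - q i‖)]
    apply add_le_add
    · apply le_of_eq
      apply Finset.sum_congr rfl
      intro i hi
      have := Finset.mem_range.1 hi
      rw [if_pos (by omega), if_pos (by omega)]
    · rw [if_neg (by omega), if_pos le_rfl]
      have := norm_add_le (q (k + 1) - q k) (q (k + 1 + 1) - q (k + 1))
      rwa [show q (k + 1) - q k + (q (k + 1 + 1) - q (k + 1)) = q (k + 1 + 1) - q k by abel] at this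
  | succ m hm ih =>
    rw [Finset.sum_range_succ, Finset.sum_range_succ _ (m + 1), if_neg (by omega),
      if_neg (by omega)]
    linarith

lemma Adm.remove {o : E3} {n : ℕ} {q : ℕ → E3} (h : Adm o (n + 1) q) {k : ℕ} (hk : k ≤ n)
    (hs : ∀ u : E3, ‖u‖ = 1 → ∃ i < n + 1, i ≠ k ∧ 1 ≤ ⟪q (i + 1), u⟫) :
    ∃ q', Adm o n q' ∧ plen q' n ≤ plen q (n + 1) := by
  refine ⟨fun i => if i ≤ k then q i else q (i + 1), ⟨?_, ?_, ?_⟩, ?_⟩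
  · simp [h.zero]
  · rw [if_neg (by omega)]; exact h.last
  · intro u hu
    obtain ⟨i, hi, hik, h1⟩ := hs u hu
    rcases lt_or_gt_of_ne hik with h2 | h2
    · exact ⟨i, by omega, by rwa [if_pos (by omega)]⟩
    · refine ⟨i - 1, by omega, ?_⟩
      rw [if_neg (by omega)]
      rwa [show i - 1 + 1 + 1 = i + 1 by omega]
  · exact remove_len q k (by omega)

lemma norm_taylor {y : E3} (hy : y ≠ 0) (z : E3) :
    ‖y + z‖ ≤ ‖y‖ + ⟪y, z⟫ / ‖y‖ + ‖z‖ ^ 2 / (2 * ‖y‖) := by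
  have h0 : 0 < ‖y‖ := norm_pos_iff.2 hy
  have h1 := norm_add_sq_real y z
  have h2 : ‖y‖ + ⟪y, z⟫ / ‖y‖ + ‖z‖ ^ 2 / (2 * ‖y‖) =
      (‖y‖ ^ 2 + ‖y + z‖ ^ 2) / (2 * ‖y‖) := by
    rw [h1]; field_simp; ring
  rw [h2, le_div_iff₀ (by positivity)]
  nlinarith [sq_nonneg (‖y‖ - ‖y + z‖)]

lemma first_var {x y z : E3} (h1 : y ≠ x) (h2 : x ≠ z)
    (h : ∀ m : ℝ, 0 < m → ‖x - y‖ + ‖z - x‖ ≤ ‖(1 + m) • x - y‖ + ‖z - (1 + m) • x‖) :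
    ⟪x, ‖z - x‖⁻¹ • (z - x)⟫ ≤ ⟪x, ‖x - y‖⁻¹ • (x - y)⟫ := by
  have n1 : x - y ≠ 0 := sub_ne_zero.2 h1.symm
  have n2 : z - x ≠ 0 := sub_ne_zero.2 h2.symm
  set M := ‖x‖ ^ 2 / (2 * ‖x - y‖) + ‖x‖ ^ 2 / (2 * ‖z - x‖) with hM
  have key : ∀ m : ℝ, 0 < m →
      ⟪x, ‖z - x‖⁻¹ • (z - x)⟫ ≤ ⟪x, ‖x - y‖⁻¹ • (x - y)⟫ + m * M := by
    intro m hm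
    have a := h m hm
    have b := norm_taylor n1 (m • x)
    have c := norm_taylor n2 (-(m • x))
    rw [show x - y + m • x = (1 + m) • x - y by module] at b
    rw [show z - x + -(m • x) = z - (1 + m) • x by module] at c
    rw [inner_neg_right, norm_neg] at c
    rw [inner_smul_right, norm_smul, Real.norm_eq_abs, mul_pow, sq_abs] at b c
    rw [inner_smul_right, inner_smul_right, real_inner_comm, real_inner_comm (x - y)]
    have : m * (‖z - x‖⁻¹ * ⟪z - x, x⟫) ≤ m * (‖x - y‖⁻¹ * ⟪x - y, x⟫ + m * M) := by
      have e1 : m * (‖z - x‖⁻¹ * ⟪z - x, x⟫) = - (-(m * ⟪z - x, x⟫) / ‖z - x‖) := by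
        rw [div_eq_mul_inv]; ring
      have e2 : m * (‖x - y‖⁻¹ * ⟪x - y, x⟫ + m * M) = m * ⟪x - y, x⟫ / ‖x - y‖ +
          m ^ 2 * ‖x‖ ^ 2 / (2 * ‖x - y‖) + m ^ 2 * ‖x‖ ^ 2 / (2 * ‖z - x‖) := by
        rw [hM]; simp only [div_eq_mul_inv]; ring
      rw [e1, e2]; linarith
    exact le_of_mul_le_mul_left this hm
  have hM0 : 0 ≤ M := by positivity
  apply le_of_forall_pos_le_add
  intro e he
  have := key (e / (M + 1)) (by positivity)
  have h3 : e / (M + 1) * M ≤ e := by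
    rw [div_mul_eq_mul_div, div_le_iff₀ (by positivity)]; nlinarith
  linarith

lemma plen_update {q : ℕ → E3} {n k : ℕ} (hk : k < n) (x : E3) :
    plen (Function.update q (k + 1) x) n - plen q n =
      ‖x - q k‖ + ‖q (k + 2) - x‖ - (‖q (k + 1) - q k‖ + ‖q (k + 2) - q (k + 1)‖) := by
  unfold plen
  rw [← Finset.sum_sub_distrib, ← Finset.sum_subset (s₁ := {k, k + 1})]
  · rw [Finset.sum_pair (by omega)]
    simp
    ring
  · intro i hi; simp at hi ⊢; omega
  · intro i _ hi
    simp at hi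
    rw [Function.update_of_ne (by omega), Function.update_of_ne (by omega), sub_self]

lemma Adm.scale {o : E3} {n : ℕ} {q : ℕ → E3} (h : Adm o n q) {k : ℕ} (hk : k < n) {m : ℝ}
    (hm : 0 < m) : Adm o n (Function.update q (k + 1) ((1 + m) • q (k + 1))) := by
  refine ⟨?_, ?_, ?_⟩
  · rw [Function.update_of_ne (by omega), h.zero]
  · rw [Function.update_of_ne (by omega), h.last]
  · intro u hu
    obtain ⟨i, hi, h1⟩ := h.sees u hu
    refine ⟨i, hi, ?_⟩
    by_cases hik : i = k
    · subst hik
      rw [Function.update_self, real_inner_smul_left]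
      nlinarith
    · rwa [Function.update_of_ne (by omega)]

theorem exists_crit {o : E3} (ho : ‖o‖ < 1) {n₀ : ℕ} {q₀ : ℕ → E3} (h₀ : Adm o n₀ q₀)
    (hl : plen q₀ n₀ ≤ 19) : ∃ n q, Crit q n ∧ q 0 = o ∧ 1 ≤ n ∧ plen q n ≤ plen q₀ n₀ := by
  classical
  have hex : ∃ n, ∃ q, Adm o n q ∧ plen q n ≤ plen q₀ n₀ := ⟨n₀, q₀, h₀, le_rfl⟩
  obtain ⟨q₁, hq₁, hl₁⟩ := Nat.find_spec hex
  have hmin : ∀ m < Nat.find hex, ¬ ∃ q, Adm o m q ∧ plen q m ≤ plen q₀ n₀ :=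
    fun m hm => Nat.find_min hex hm
  generalize Nat.find hex = n at *
  obtain ⟨q, hq, hqm⟩ := hq₁.exists_min
  have hlq : plen q n ≤ plen q₀ n₀ := (hqm q₁ hq₁).trans hl₁
  have hn : 1 ≤ n := by
    obtain ⟨i, hi, _⟩ := hq.sees (EuclideanSpace.single 0 1) (by simp)
    omega
  have hrem : ∀ k < n, ∃ u : E3, ‖u‖ = 1 ∧ ∀ i < n, i ≠ k → ⟪q (i + 1), u⟫ < 1 := by
    intro k hk
    by_contra! hc
    obtain ⟨m, rfl⟩ : ∃ m, n = m + 1 := ⟨n - 1, by omega⟩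
    obtain ⟨q', h1, h2⟩ := hq.remove (k := k) (by omega) hc
    exact hmin m (by omega) ⟨q', h1, h2.trans hlq⟩
  have hone : ∀ i < n, 1 ≤ ‖q (i + 1)‖ := by
    intro k hk
    by_contra! hlt
    obtain ⟨u, hu, h1⟩ := hrem k hk
    obtain ⟨i, hi, h2⟩ := hq.sees u hu
    by_cases hik : i = k
    · subst hik
      have := real_inner_le_norm (q (i + 1)) u
      rw [hu] at this; linarith
    · linarith [h1 i hi hik]
  have hne : ∀ i ≤ n, q i ≠ q (i + 1) := by
    intro k hk he
    rcases Nat.eq_zero_or_pos k with rfl | hk0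
    · have := hone 0 (by omega)
      rw [← he, hq.zero] at this; linarith
    · rcases hk.eq_or_lt with rfl | hkn
      · have := hone (k - 1) (by omega)
        rw [show k - 1 + 1 = k by omega, he, hq.last] at this; linarith
      · obtain ⟨u, hu, h1⟩ := hrem k hkn
        obtain ⟨i, hi, h2⟩ := hq.sees u hu
        by_cases hik : i = k
        · have := h1 (k - 1) (by omega) (by omega)
          rw [show k - 1 + 1 = k by omega, he, ← hik] at this; linarith
        · linarith [h1 i hi hik]
  refine ⟨n, q, ⟨by rw [hq.last, hq.zero], by rw [hq.zero]; exact ho, hne, hone, ?_, ?_, hq.sees⟩,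
    hq.zero, hn, hlq⟩
  · intro i hi
    have := hq.bound (i := i + 1) (by omega)
    linarith
  · intro i hi
    apply first_var (hne i hi.le) (hne (i + 1) hi)
    intro m hm
    have h1 := hqm _ (hq.scale hi hm)
    have h2 := plen_update (q := q) hi ((1 + m) • q (i + 1))
    change _ ≤ ‖(1 + m) • q (i + 1) - q i‖ + ‖q (i + 2) - (1 + m) • q (i + 1)‖
    change ‖q (i + 1) - q i‖ + ‖q (i + 2) - q (i + 1)‖ ≤ _
    linarith


lemma speed_lip {ℓ : ℝ} {β : ℝ → E3} {C : ℝ≥0}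
    (hsp : HasConstantSpeedOnWith β (Icc 0 ℓ) C) {s t : ℝ} (hs : s ∈ Icc 0 ℓ) (ht : t ∈ Icc 0 ℓ)
    (hst : s ≤ t) : ‖β t - β s‖ ≤ C * (t - s) := by
  have h1 := hsp hs ht
  have h2 : edist (β t) (β s) ≤ eVariationOn β (Icc 0 ℓ ∩ Icc s t) :=
    eVariationOn.edist_le β ⟨ht, hst, le_rfl⟩ ⟨hs, le_rfl, hst⟩
  rw [h1, edist_dist, dist_eq_norm] at h2
  exact (ENNReal.ofReal_le_ofReal_iff (mul_nonneg C.2 (sub_nonneg.2 hst))).1 h2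

lemma approx_N {ℓ : ℝ} {β : ℝ → E3} {C : ℝ≥0} (hmin : IsMinimalInspection 0 ℓ β)
    (hsp : HasConstantSpeedOnWith β (Icc 0 ℓ) C) (N : ℕ)
    (hN : ‖β 0‖ < 1 - C * (ℓ / (N + 1))) :
    ∃ q, Adm ((1 - C * (ℓ / (N + 1)))⁻¹ • β 0) N q ∧
      plen q N ≤ (1 - C * (ℓ / (N + 1)))⁻¹ * (eVariationOn β (Icc 0 ℓ)).toReal := by
  have hℓ : 0 < ℓ := hmin.1.1
  set κ := 1 - C * (ℓ / (N + 1)) with hκ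
  have hκ0 : 0 < κ := (norm_nonneg _).trans_lt hN
  have hN0 : (0 : ℝ) < N + 1 := by positivity
  let u : ℕ → ℝ := fun i => i * (ℓ / (N + 1))
  have hstep : 0 < ℓ / (N + 1) := by positivity
  have hu0 : u 0 = 0 := by simp [u]
  have huN : u (N + 1) = ℓ := by simp only [u]; push_cast; field_simp
  have hmono : Monotone u := fun i j hij => by
    have : (i : ℝ) ≤ j := by exact_mod_cast hij
    simp only [u]; gcongr
  have hmem : ∀ i ≤ N + 1, u i ∈ Icc 0 ℓ := fun i hi =>
    ⟨hu0 ▸ hmono (Nat.zero_le i), huN ▸ hmono hi⟩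
  have hclosed : β ℓ = β 0 := hmin.1.2.2.1.symm
  refine ⟨fun i => κ⁻¹ • β (u i), ⟨by simp only [hu0], by simp only [huN, hclosed], ?_⟩, ?_⟩
  · intro w hw
    obtain ⟨_, ⟨s, hs, rfl⟩, h1⟩ := hmin.1.sees w hw
    set i := ⌊s / (ℓ / (N + 1))⌋₊ with hi
    have hi1 : (i : ℝ) ≤ s / (ℓ / (N + 1)) := Nat.floor_le (by have := hs.1; positivity)
    have hi2 : s / (ℓ / (N + 1)) < i + 1 := Nat.lt_floor_add_one _
    rw [le_div_iff₀ hstep] at hi1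
    rw [div_lt_iff₀ hstep] at hi2
    have hiN : i ≤ N + 1 := by
      have h3 : (i : ℝ) ≤ N + 1 := by
        by_contra! hc
        have : (N + 1 : ℝ) * (ℓ / (N + 1)) = ℓ := by field_simp
        nlinarith [hs.2]
      exact_mod_cast h3
    have h2 := speed_lip hsp (hmem i hiN) hs hi1
    have h3 : κ ≤ ⟪β (u i), w⟫ := by
      have h4 := real_inner_le_norm (β s - β (u i)) w
      rw [inner_sub_left, hw, mul_one] at h4
      have h5 : C * (s - u i) ≤ C * (ℓ / (N + 1)) := by
        apply mul_le_mul_of_nonneg_left _ C.2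
        simp only [u]; linarith
      linarith
    have h6 : β (u i) ≠ β 0 := by
      intro h
      have h4 := real_inner_le_norm (β (u i)) w
      rw [h, hw, mul_one] at h4
      rw [h] at h3
      linarith
    have h7 : i ≠ 0 := fun h => h6 (by rw [h, hu0])
    have h8 : i ≠ N + 1 := fun h => h6 (by rw [h, huN, hclosed])
    refine ⟨i - 1, by omega, ?_⟩
    rw [show i - 1 + 1 = i by omega, real_inner_smul_left, inv_mul_eq_div, le_div_iff₀ hκ0]
    linarith
  · have h1 := eVariationOn.sum_le_of_monotoneOn_Iic (f := β) (s := Icc 0 ℓ) (n := N + 1) (u := u)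
      (hmono.monotoneOn _) hmem
    have h2 : ∑ i ∈ Finset.range (N + 1), ‖β (u (i + 1)) - β (u i)‖ ≤
        (eVariationOn β (Icc 0 ℓ)).toReal := by
      rw [← ENNReal.ofReal_le_iff_le_toReal hmin.1.2.2.2.1, ENNReal.ofReal_sum_of_nonneg
        (fun _ _ => norm_nonneg _)]
      simpa only [edist_dist, dist_eq_norm] using h1
    have h3 : plen (fun i => κ⁻¹ • β (u i)) N =
        κ⁻¹ * ∑ i ∈ Finset.range (N + 1), ‖β (u (i + 1)) - β (u i)‖ := by
      rw [plen, Finset.mul_sum]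
      apply Finset.sum_congr rfl
      intro i _
      rw [← smul_sub, norm_smul, Real.norm_eq_abs, abs_of_pos (by positivity)]
    rw [h3]
    gcongr

lemma approx {ℓ : ℝ} {β : ℝ → E3} {C : ℝ≥0} (hmin : IsMinimalInspection 0 ℓ β)
    (hsp : HasConstantSpeedOnWith β (Icc 0 ℓ) C) (ho : ‖β 0‖ < 1) {r ε : ℝ} (hr : ‖β 0‖ < r)
    (hε : 0 < ε) :
    ∃ o : E3, ‖o‖ ≤ r ∧ ∃ n q, Adm o n q ∧
      plen q n ≤ (eVariationOn β (Icc 0 ℓ)).toReal + ε := by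
  set V := (eVariationOn β (Icc 0 ℓ)).toReal
  have t0 : Filter.Tendsto (fun N : ℕ => 1 - C * (ℓ / ((N : ℝ) + 1))) Filter.atTop (nhds 1) := by
    have h1 : Filter.Tendsto (fun N : ℕ => ((N : ℝ) + 1)⁻¹) Filter.atTop (nhds 0) := by
      simpa using tendsto_one_div_add_atTop_nhds_zero_nat (𝕜 := ℝ)
    have h2 := ((h1.const_mul ℓ).const_mul (C : ℝ)).const_sub 1
    simpa [div_eq_mul_inv] using h2
  have t1 := t0.inv₀ one_ne_zero
  have t2 := t1.mul_const ‖β 0‖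
  have t3 := t1.mul_const V
  rw [inv_one, one_mul] at t2 t3
  obtain ⟨N, h1, h2, h3⟩ := ((t0.eventually (lt_mem_nhds ho)).and
    ((t2.eventually (gt_mem_nhds hr)).and
      (t3.eventually (gt_mem_nhds (show V < V + ε by linarith))))).exists
  obtain ⟨q, h4, h5⟩ := approx_N hmin hsp N h1
  refine ⟨_, ?_, N, q, h4, h5.trans h3.le⟩
  rw [norm_smul, Real.norm_eq_abs, abs_of_pos (inv_pos.2 ((norm_nonneg _).trans_lt h1))]
  exact h2.le

lemma Crit.close {a b : ℝ} {γ : ℝ → E3} (hmin : IsMinimalInspection a b γ) {n : ℕ} {q : ℕ → E3}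
    (h : Crit q n) (hn : 1 ≤ n) : (eVariationOn γ (Icc a b)).toReal ≤
      plen q n - ‖q 1 - q 0‖ - ‖q 0 - q n‖ + ‖q 1 - q n‖ := by
  obtain ⟨m, rfl⟩ : ∃ m, n = m + 1 := ⟨n - 1, by omega⟩
  have h1 := (Arc.poly (fun i => q (i + 1)) m).trans (Arc.seg (q (m + 1)) (q 1))
  have h2 := hmin.le_of_arc h1 (by
    intro u hu
    obtain ⟨i, hi, h3⟩ := h.sees u hu
    exact ⟨q (i + 1), Or.inl ⟨i, by simp; omega, rfl⟩, h3⟩)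
  rw [← ENNReal.ofReal_add (Finset.sum_nonneg fun _ _ => norm_nonneg _) (norm_nonneg _)] at h2
  have h3 := ENNReal.toReal_le_of_le_ofReal
    (add_nonneg (Finset.sum_nonneg fun _ _ => norm_nonneg _) (norm_nonneg _)) h2
  rw [plen, Finset.sum_range_succ, Finset.sum_range_succ', h.closed]
  simp only [zero_add]
  linarith

theorem no_inside {ℓ : ℝ} {β : ℝ → E3} {C : ℝ≥0} (hmin : IsMinimalInspection 0 ℓ β)
    (hsp : HasConstantSpeedOnWith β (Icc 0 ℓ) C) : 1 ≤ ‖β 0‖ := by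
  by_contra! ho
  set V := (eVariationOn β (Icc 0 ℓ)).toReal with hV
  have hV4 : V ≤ 4 * π := ENNReal.toReal_le_of_le_ofReal (by positivity) hmin.le_four_pi
  have hV0 : 0 ≤ V := ENNReal.toReal_nonneg
  have hpi : π < 3.15 := Real.pi_lt_d2
  set r := (1 + ‖β 0‖) / 2 with hr
  have hr1 : r < 1 := by rw [hr]; linarith
  have hr2 : ‖β 0‖ < r := by rw [hr]; linarith
  have hr0 : 0 ≤ r := (norm_nonneg _).trans hr2.le
  set ε := 0.00000001 * (1 - r) with hε
  have hε0 : 0 < ε := by rw [hε]; apply mul_pos (by norm_num); linarith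
  have hε1 : ε ≤ 0.00000001 := by rw [hε]; norm_num; linarith
  obtain ⟨o, hor, n₀, q₀, hA, hl⟩ := approx hmin hsp ho hr2 hε0
  rw [← hV] at hl
  obtain ⟨n, q, hc, hq0, hn, hl'⟩ := exists_crit (hor.trans_lt hr1) hA (by norm_num at hε1; linarith)
  have hgap := hc.gap
  change _ ≤ plen q n + _ at hgap
  have hclose := hc.close hmin hn
  rw [← hV] at hclose
  -- the two edges at the base point
  have s0 := vdir_step (hc.ne 0 (by omega))
  have sn := vdir_step (hc.ne n le_rfl)
  have n0 := vdir_norm (hc.ne 0 (by omega))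
  have nn := vdir_norm (hc.ne n le_rfl)
  rw [hc.closed] at sn
  simp only [zero_add] at s0
  have hb1 : 1 - r ≤ ‖q 1 - q 0‖ := by
    have h1 := hc.one_le 0 (by omega)
    simp only [zero_add] at h1
    have h2 := norm_sub_norm_le (q 1) (q 0)
    rw [hq0] at h2 ⊢; linarith
  have hb2 : 1 - r ≤ ‖q 0 - q n‖ := by
    have h1 := hc.one_le (n - 1) (by omega)
    rw [show n - 1 + 1 = n by omega] at h1
    have h2 := norm_sub_norm_le (q n) (q 0)
    rw [norm_sub_rev, hq0] at h2
    rw [hq0]; linarith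
  generalize vdir q 0 = v at *
  generalize vdir q n = w at *
  set A := ‖q 1 - q 0‖ with hAd
  set B := ‖q 0 - q n‖ with hBd
  set D := ‖q 1 - q n‖ with hDd
  have hD : D ^ 2 = A ^ 2 + B ^ 2 + 2 * (A * B) * ⟪v, w⟫ := by
    have e : q 1 - q n = A • v + B • w := by
      have e1 : q 1 - q 0 = A • v := sub_eq_of_eq_add (by rw [add_comm]; exact s0)
      have e2 : q 0 - q n = B • w := sub_eq_of_eq_add (by rw [add_comm]; exact sn)
      rw [← e1, ← e2]; abel
    rw [hDd, e, norm_add_sq_real, norm_smul, norm_smul, n0, nn, inner_smul_left, inner_smul_right,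
      Real.norm_eq_abs, Real.norm_eq_abs, mul_one, mul_one, sq_abs, sq_abs]
    simp; ring
  have hvw : ‖w - v‖ ^ 2 = 2 - 2 * ⟪v, w⟫ := by
    rw [norm_sub_sq_real, n0, nn, real_inner_comm]; ring
  set X := ‖w - v‖ with hX
  have hX0 : 0 ≤ X := norm_nonneg _
  have hD0 : 0 ≤ D := norm_nonneg _
  have hABD : A + B - D ≤ ε := by linarith
  have hd : 0 < 1 - r := by linarith
  have hDAB : D ≤ A + B := by
    rw [hDd, hAd, hBd, show q 1 - q n = (q 1 - q 0) + (q 0 - q n) by abel]; exact norm_add_le _ _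
  have k1 : A * B * X ^ 2 = (A + B - D) * (A + B + D) := by rw [hvw]; linear_combination hD
  have k2 : A * B * X ^ 2 ≤ 2 * ε * (A + B) := by
    rw [k1]; nlinarith
  have hA0 : 0 < A := by linarith
  have hB0 : 0 < B := by linarith
  have k3 : (1 - r) * (A + B) ≤ 2 * (A * B) := by nlinarith
  have k4 : (1 - r) * X ^ 2 ≤ 4 * ε := by
    have h1 : A * B * ((1 - r) * X ^ 2) ≤ A * B * (4 * ε) := by
      calc A * B * ((1 - r) * X ^ 2) = (1 - r) * (A * B * X ^ 2) := by ring
        _ ≤ (1 - r) * (2 * ε * (A + B)) := mul_le_mul_of_nonneg_left k2 hd.le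
        _ = 2 * ε * ((1 - r) * (A + B)) := by ring
        _ ≤ 2 * ε * (2 * (A * B)) := mul_le_mul_of_nonneg_left k3 (by positivity)
        _ = _ := by ring
    exact le_of_mul_le_mul_left h1 (by positivity)
  have k5 : X ^ 2 ≤ 0.00000004 := by
    rw [hε] at k4
    have : (1 - r) * X ^ 2 ≤ (1 - r) * 0.00000004 := by norm_num at k4 ⊢; linarith
    exact le_of_mul_le_mul_left this hd
  have k6 : X ≤ 0.0002 := by
    rw [← sq_le_sq₀ hX0 (by norm_num)]
    norm_num at k5 ⊢; linarith
  norm_num at hgap k6 hε1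
  linarith

theorem part1 {a b : ℝ} {γ : ℝ → E3} {C : ℝ≥0} (hmin : IsMinimalInspection a b γ)
    (hsp : HasConstantSpeedOnWith γ (Icc a b) C) : ∀ t ∈ Icc a b, 1 ≤ ‖γ t‖ := by
  intro t ht
  obtain ⟨β, h1, h2, h3, _⟩ := shift_min hmin hsp ht
  have := no_inside h1 h2
  rwa [h3 0 ⟨le_rfl, sub_nonneg.2 ht.2⟩, add_zero] at this

/-- A constant speed minimal inspection curve lies outside the open unit ball, and at
almost every differentiable point with nonvanishing derivative its tangent line avoids the
open unit ball; equivalently `⟨γ,γ′⟩² ≤ |γ′|²(|γ|² − 1)`, i.e. the angle `α(t)` between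
`γ(t)` and `γ′(t)` is at least `arcsin(1/|γ(t)|)`. -/
theorem minimal_inspection_tangent_lines_avoid_ball
    (a b : ℝ) (γ : ℝ → E3) (C : ℝ≥0)
    (hmin : IsMinimalInspection a b γ)
    (hspeed : HasConstantSpeedOnWith γ (Set.Icc a b) C) :
    (∀ t ∈ Set.Icc a b, 1 ≤ ‖γ t‖) ∧
    (∀ᵐ t ∂(volume.restrict (Set.Icc a b)), ∀ v : E3, v ≠ 0 →
      HasDerivWithinAt γ v (Set.Icc a b) t →
        (∀ s : ℝ, 1 ≤ ‖γ t + s • v‖) ∧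
          ⟪γ t, v⟫ ^ 2 ≤ ‖v‖ ^ 2 * (‖γ t‖ ^ 2 - 1)) := by
  exact ⟨part1 hmin hspeed, final_of_part1 a b γ C hmin hspeed (part1 hmin hspeed)⟩
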